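/- arXiv:cs/0502043 — 3 statements merged into one kernel-verified Lean document; each statement's English description precedes it below -/
import Mathlib

section
/- For any two point sets S and T in R^2 in general position with |S| = |T| = n, one can add at most n/2 + 3 Steiner points to each set so that the augmented sets admit compatible triangulations. -/
noncomputable section
open scoped Classical

/-- The Euclidean plane. -/
abbrev Pt : Type := EuclideanSpace ℝ (Fin 2)

/-- `a`, `b`, `c` are in clockwise orientation (negative signed area). -/
def cwOriented (a b c : Pt) : Prop :=
  (b 0 - a 0) * (c 1 - a 1) - (b 1 - a 1) * (c 0 - a 0) < 0

/-- The vertex set of an (ordered) triangle. -/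
def triPts (t : Pt × Pt × Pt) : Set Pt := {t.1, t.2.1, t.2.2}

/-- The closed triangle spanned by an ordered triple. -/
def triHull (t : Pt × Pt × Pt) : Set Pt := convexHull ℝ (triPts t)

/-- The open triangle spanned by an ordered triple. -/
def triInt (t : Pt × Pt × Pt) : Set Pt := interior (triHull t)

/-- A set of points is in general position if no three of its points are collinear. -/
def GenPos (A : Set Pt) : Prop :=
  ∀ p ∈ A, ∀ q ∈ A, ∀ r ∈ A, p ≠ q → p ≠ r → q ≠ r → ¬ Collinear ℝ ({p, q, r} : Set Pt)

/-- A triangulation of a finite point set `S`: a family of empty triangles, with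
vertices in `S` and normalized clockwise orientation, with pairwise disjoint
interiors, covering the convex hull of `S`, and such that every point of `S`
meeting a triangle is one of its vertices (so all points of `S` are used and
triangles are empty). -/
structure Triangulation (S : Finset Pt) where
  faces : Finset (Pt × Pt × Pt)
  verts_mem : ∀ t ∈ faces, triPts t ⊆ (S : Set Pt)
  cw_face : ∀ t ∈ faces, cwOriented t.1 t.2.1 t.2.2
  empty_face : ∀ t ∈ faces, ∀ p ∈ S, p ∈ triHull t → p ∈ triPts t
  disj : ∀ t ∈ faces, ∀ t' ∈ faces, t ≠ t' → triInt t ∩ triInt t' = ∅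
  cover : (⋃ t ∈ faces, triHull t) = convexHull ℝ (S : Set Pt)

/-- `(a,b,c)` is a (clockwise) face of the triangulation, up to cyclic rotation. -/
def IsFace {S : Finset Pt} (T : Triangulation S) (a b c : Pt) : Prop :=
  (a, b, c) ∈ T.faces ∨ (b, c, a) ∈ T.faces ∨ (c, a, b) ∈ T.faces

/-- Compatibility of two triangulations via a prescribed bijection:
clockwise-oriented triangles correspond to clockwise-oriented triangles. -/
def CompatibleVia {S T' : Finset Pt} (TS : Triangulation S) (TT : Triangulation T')
    (f : Pt → Pt) : Prop :=
  Set.BijOn f (S : Set Pt) (T' : Set Pt) ∧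
    ∀ a ∈ S, ∀ b ∈ S, ∀ c ∈ S, (IsFace TS a b c ↔ IsFace TT (f a) (f b) (f c))

/-- Two triangulations are compatible if some bijection realizes the compatibility. -/
def Compatible {S T' : Finset Pt} (TS : Triangulation S) (TT : Triangulation T') : Prop :=
  ∃ f : Pt → Pt, CompatibleVia TS TT f

/-- The number of extreme points of `S` (points on the boundary of the convex hull). -/
def hullCount (S : Finset Pt) : ℕ :=
  (S.filter (fun p => p ∈ frontier (convexHull ℝ (S : Set Pt)))).card

/-- Signed area. -/
def ori (a b c : Pt) : ℝ :=
  (b 0 - a 0) * (c 1 - a 1) - (b 1 - a 1) * (c 0 - a 0)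

lemma ori_affine (a b x y : Pt) (s t : ℝ) (h : s + t = 1) :
    ori a b (s • x + t • y) = s * ori a b x + t * ori a b y := by
  obtain rfl : s = 1 - t := by linarith
  simp only [ori, PiLp.add_apply, PiLp.smul_apply, smul_eq_mul]
  ring

lemma convex_ori_le (a b : Pt) : Convex ℝ {q | ori a b q ≤ 0} := by
  intro x hx y hy s t hs ht h
  simp only [Set.mem_ofPred_eq] at *
  rw [ori_affine _ _ _ _ _ _ h]
  nlinarith [mul_nonneg hs (neg_nonneg.2 hx), mul_nonneg ht (neg_nonneg.2 hy)]

lemma hull_subset (t : Pt × Pt × Pt) (C : Set Pt) (hC : Convex ℝ C)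
    (h1 : t.1 ∈ C) (h2 : t.2.1 ∈ C) (h3 : t.2.2 ∈ C) : triHull t ⊆ C := by
  apply convexHull_min _ hC
  rintro x (rfl | rfl | rfl) <;> assumption

lemma mem_hull_iff {a b c : Pt} (h : ori a b c < 0) (q : Pt) :
    q ∈ triHull (a, b, c) ↔ ori a b q ≤ 0 ∧ ori b c q ≤ 0 ∧ ori c a q ≤ 0 := by
  constructor
  · intro hq
    refine ⟨hull_subset (a, b, c) _ (convex_ori_le a b) ?_ ?_ ?_ hq,
      hull_subset (a, b, c) _ (convex_ori_le b c) ?_ ?_ ?_ hq,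
      hull_subset (a, b, c) _ (convex_ori_le c a) ?_ ?_ ?_ hq⟩ <;>
    simp only [Set.mem_ofPred_eq, ori] at * <;> linarith
  · rintro ⟨h1, h2, h3⟩
    have hne : ori a b c ≠ 0 := h.ne
    have key : q = (ori b c q / ori a b c) • a + (ori c a q / ori a b c) • b
        + (ori a b q / ori a b c) • c := by
      ext i
      simp only [PiLp.add_apply, PiLp.smul_apply, smul_eq_mul]
      field_simp
      fin_cases i <;> simp only [ori] <;> simp <;> ring
    have hs : ori b c q / ori a b c + ori c a q / ori a b c + ori a b q / ori a b c = 1 := by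
      field_simp
      simp only [ori]; ring
    have ha : a ∈ triHull (a, b, c) := subset_convexHull _ _ (by simp [triPts])
    have hb : b ∈ triHull (a, b, c) := subset_convexHull _ _ (by simp [triPts])
    have hc : c ∈ triHull (a, b, c) := subset_convexHull _ _ (by simp [triPts])
    rw [key]
    have hconv : Convex ℝ (triHull (a, b, c)) := convex_convexHull _ _
    have := hconv.sum_mem (t := (Finset.univ : Finset (Fin 3)))
      (w := ![ori b c q / ori a b c, ori c a q / ori a b c, ori a b q / ori a b c])
      (z := ![a, b, c]) (by
        intro i _
        fin_cases i <;> simp <;> exact div_nonneg_of_nonpos (by assumption) h.le)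
      (by simp [Fin.sum_univ_three, hs]) (by
        intro i _
        fin_cases i <;> simp <;> assumption)
    simpa [Fin.sum_univ_three] using this

lemma ori_line_interior {a b c : Pt} (h : ori a b c ≠ 0) :
    interior {q | ori a b q = 0} = ∅ := by
  by_contra hne
  obtain ⟨q, hq⟩ := Set.nonempty_iff_ne_empty.2 hne
  have hcont : Continuous (fun s : ℝ => (1 - s) • q + s • c) := by fun_prop
  have h0 : (fun s : ℝ => (1 - s) • q + s • c) 0 ∈ interior {q | ori a b q = 0} := by simpa using hq
  have hev := hcont.continuousAt.eventually (isOpen_interior.mem_nhds h0)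
  obtain ⟨ε, hε, hb⟩ := Metric.eventually_nhds_iff.1 hev
  have := hb (y := ε / 2) (by rw [Real.dist_eq, sub_zero, abs_of_pos (by linarith)]; linarith)
  have h1 := interior_subset this
  have h2 := interior_subset hq
  simp only [Set.mem_ofPred_eq] at h1 h2
  rw [ori_affine _ _ _ _ _ _ (by ring), h2] at h1
  have : ε / 2 * ori a b c ≠ 0 := mul_ne_zero (by linarith) h
  apply this
  linarith

lemma disj_of_sep (a b c : Pt) (hc : ori a b c ≠ 0) (t t' : Pt × Pt × Pt)
    (h1 : ori a b t.1 ≤ 0) (h2 : ori a b t.2.1 ≤ 0) (h3 : ori a b t.2.2 ≤ 0)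
    (h1' : 0 ≤ ori a b t'.1) (h2' : 0 ≤ ori a b t'.2.1) (h3' : 0 ≤ ori a b t'.2.2) :
    triInt t ∩ triInt t' = ∅ := by
  have e : ∀ q, ori b a q = - ori a b q := by intro q; simp only [ori]; ring
  have s1 : triHull t ⊆ {q | ori a b q ≤ 0} := hull_subset _ _ (convex_ori_le a b) h1 h2 h3
  have s2 : triHull t' ⊆ {q | ori b a q ≤ 0} :=
    hull_subset _ _ (convex_ori_le b a) (by simp only [Set.mem_ofPred_eq, e]; linarith)
      (by simp only [Set.mem_ofPred_eq, e]; linarith) (by simp only [Set.mem_ofPred_eq, e]; linarith)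
  rw [triInt, triInt, ← interior_inter, ← Set.subset_empty_iff, ← ori_line_interior hc]
  apply interior_mono
  rintro q ⟨hq, hq'⟩
  have a1 := s1 hq
  have a2 := s2 hq'
  simp only [Set.mem_ofPred_eq, e] at *
  linarith

/-- The index triples of the universal triangulation. -/
def idxFaces (m : ℕ) : Finset (ℕ × ℕ × ℕ) :=
  {(0, 2, 1)} ∪ ((Finset.range m).image (fun k => (0, k + 3, k + 2)) ∪
    (Finset.range m).image (fun k => (1, k + 2, k + 3)))

lemma mem_idxFaces {m : ℕ} {t : ℕ × ℕ × ℕ} : t ∈ idxFaces m ↔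
    t = (0, 2, 1) ∨ (∃ k < m, t = (0, k + 3, k + 2)) ∨ ∃ k < m, t = (1, k + 2, k + 3) := by
  simp [idxFaces, eq_comm]

/-- Vertex numbering. -/
def vtx (U D : Pt) (p : ℕ → Pt) : ℕ → Pt
  | 0 => U
  | 1 => D
  | (k + 2) => p k

/-- Nested position of the points `p 0, …, p m` with respect to `U`, `D`. -/
structure Nested (U D : Pt) (p : ℕ → Pt) (m : ℕ) : Prop where
  hA : ∀ k ≤ m, ori U (p k) D < 0
  hB : ∀ k l, k < l → l ≤ m → ori U (p l) (p k) < 0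
  hC : ∀ k l, k < l → l ≤ m → ori D (p k) (p l) < 0

lemma ori_rot (a b c : Pt) : ori a b c = ori b c a := by simp only [ori]; ring
lemma ori_swap (a b c : Pt) : ori a b c = - ori a c b := by simp only [ori]; ring
lemma ori_self1 (a b : Pt) : ori a b a = 0 := by simp only [ori]; ring
lemma ori_self2 (a b : Pt) : ori a b b = 0 := by simp only [ori]; ring
lemma ori_self3 (a b : Pt) : ori a a b = 0 := by simp only [ori]; ring

/-- Map a triple. -/
def map3 (v : ℕ → Pt) (t : ℕ × ℕ × ℕ) : Pt × Pt × Pt := (v t.1, v t.2.1, v t.2.2)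

lemma Nested.inj {U D : Pt} {p : ℕ → Pt} {m : ℕ} (h : Nested U D p m) :
    Set.InjOn (vtx U D p) (Finset.range (m + 3) : Set ℕ) := by
  have key : ∀ i j, i < j → j < m + 3 → vtx U D p i ≠ vtx U D p j := by
    intro i j hij hj e
    match i, j with
    | 0, 1 =>
      have := h.hA 0 (by omega)
      simp only [vtx] at e
      rw [e, ori_self1] at this; linarith
    | 0, (l + 2) =>
      have := h.hA l (by omega)
      simp only [vtx] at e
      rw [e, ori_self3] at this; linarith
    | 1, (l + 2) =>
      have := h.hA l (by omega)
      simp only [vtx] at e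
      rw [e, ori_self2] at this; linarith
    | (k + 2), (l + 2) =>
      have := h.hB k l (by omega) (by omega)
      simp only [vtx] at e
      rw [e, ori_self2] at this; linarith
  intro i hi j hj e
  simp only [Finset.coe_range, Set.mem_Iio] at hi hj
  rcases lt_trichotomy i j with hl | hl | hl
  · exact absurd e (key i j hl hj)
  · exact hl
  · exact absurd e.symm (key j i hl hi)

lemma Nested.cover {U D : Pt} {p : ℕ → Pt} {m : ℕ} (h : Nested U D p m) (q : Pt) :
    ∀ k ≤ m, q ∈ triHull (U, p k, D) → ∃ t ∈ idxFaces m, q ∈ triHull (map3 (vtx U D p) t) := by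
  intro k
  induction k with
  | zero =>
    intro _ hq
    exact ⟨(0, 2, 1), mem_idxFaces.2 (Or.inl rfl), hq⟩
  | succ k ih =>
    intro hk hq
    have A := h.hA k (by omega)
    have A' := h.hA (k + 1) (by omega)
    have B := h.hB k (k + 1) (by omega) hk
    have C := h.hC k (k + 1) (by omega) hk
    rw [mem_hull_iff A'] at hq
    obtain ⟨q1, q2, q3⟩ := hq
    by_cases hT : ori U (p k) q ≤ 0 ∧ ori (p k) D q ≤ 0
    · exact ih (by omega) ((mem_hull_iff A q).2 ⟨hT.1, hT.2, q3⟩)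
    -- the three vectors from `p k` to `U`, `D`, `p (k+1)` positively span the plane
    have ident : ori D (p k) (p (k + 1)) * ori U (p k) q
        + ori U (p (k + 1)) (p k) * ori D (p k) q
        = ori U (p k) D * ori (p k) (p (k + 1)) q := by
      simp only [ori]; ring
    have eD : ori (p k) D q = - ori D (p k) q := by simp only [ori]; ring
    have eP : ori (p (k + 1)) (p k) q = - ori (p k) (p (k + 1)) q := by simp only [ori]; ring
    have eU : ori (p k) U q = - ori U (p k) q := by simp only [ori]; ring
    have eD' : ori (p (k + 1)) D q = - ori D (p (k + 1)) q := by simp only [ori]; ring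
    by_cases hs : 0 ≤ ori (p k) (p (k + 1)) q
    · refine ⟨(0, k + 3, k + 2), mem_idxFaces.2 (Or.inr (Or.inl ⟨k, by omega, rfl⟩)), ?_⟩
      refine (mem_hull_iff (a := U) (b := p (k + 1)) (c := p k) B q).2 ⟨q1, by linarith, ?_⟩
      by_contra hn
      have hu : ori U (p k) q < 0 := by linarith
      have hd : ori D (p k) q < 0 := by
        by_contra hd
        exact hT ⟨hu.le, by linarith⟩
      nlinarith [mul_pos_of_neg_of_neg C hu, mul_pos_of_neg_of_neg B hd,
        mul_nonneg (neg_nonneg.2 A.le) hs]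
    · push Not at hs
      refine ⟨(1, k + 2, k + 3), mem_idxFaces.2 (Or.inr (Or.inr ⟨k, by omega, rfl⟩)), ?_⟩
      refine (mem_hull_iff (a := D) (b := p k) (c := p (k + 1)) C q).2 ⟨?_, hs.le, q2⟩
      by_contra hn
      push Not at hn
      have hu : 0 < ori U (p k) q := by
        by_contra hu
        exact hT ⟨by linarith, by linarith⟩
      nlinarith [mul_neg_of_neg_of_pos C hu, mul_neg_of_neg_of_pos B hn,
        mul_pos_of_neg_of_neg A hs]

lemma Nested.triang {U D : Pt} {p : ℕ → Pt} {m : ℕ} (h : Nested U D p m) :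
    ∃ T : Triangulation ((Finset.range (m + 3)).image (vtx U D p)),
      T.faces = (idxFaces m).image (map3 (vtx U D p)) := by
  have hv : ∀ x ∈ (Finset.range (m + 3)).image (vtx U D p), x = U ∨ x = D ∨ ∃ k ≤ m, x = p k := by
    intro x hx
    obtain ⟨i, hi, rfl⟩ := Finset.mem_image.1 hx
    have := Finset.mem_range.1 hi
    match i with
    | 0 => exact Or.inl rfl
    | 1 => exact Or.inr (Or.inl rfl)
    | (k + 2) => exact Or.inr (Or.inr ⟨k, by omega, rfl⟩)
  have hB0 : ∀ k l, k ≤ l → l ≤ m → ori U (p l) (p k) ≤ 0 := by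
    intro k l hkl hl
    rcases hkl.eq_or_lt with rfl | hlt
    · rw [ori_self2]
    · exact (h.hB k l hlt hl).le
  have hC0 : ∀ k l, k ≤ l → l ≤ m → ori D (p k) (p l) ≤ 0 := by
    intro k l hkl hl
    rcases hkl.eq_or_lt with rfl | hlt
    · rw [ori_self2]
    · exact (h.hC k l hlt hl).le
  have hB1 : ∀ k l, k ≤ l → l ≤ m → 0 ≤ ori U (p k) (p l) := by
    intro k l hkl hl
    have := hB0 k l hkl hl
    rw [ori_swap]; linarith
  have hC1 : ∀ k l, k ≤ l → l ≤ m → 0 ≤ ori D (p l) (p k) := by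
    intro k l hkl hl
    have := hC0 k l hkl hl
    rw [ori_swap]; linarith
  have hA1 : ∀ k ≤ m, 0 < ori D (p k) U := by
    intro k hk
    have := h.hA k hk
    simp only [ori] at *
    linarith
  have hcw : ∀ t ∈ idxFaces m, ori (vtx U D p t.1) (vtx U D p t.2.1) (vtx U D p t.2.2) < 0 := by
    intro t ht
    rcases mem_idxFaces.1 ht with rfl | ⟨k, hk, rfl⟩ | ⟨k, hk, rfl⟩
    · exact h.hA 0 (by omega)
    · exact h.hB k (k + 1) (by omega) (by omega)
    · exact h.hC k (k + 1) (by omega) (by omega)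
  have hidx : ∀ t ∈ idxFaces m, t.1 < m + 3 ∧ t.2.1 < m + 3 ∧ t.2.2 < m + 3 := by
    intro t ht
    rcases mem_idxFaces.1 ht with rfl | ⟨k, hk, rfl⟩ | ⟨k, hk, rfl⟩ <;> simp <;> omega
  have hverts : ∀ t ∈ idxFaces m, triPts (map3 (vtx U D p) t) ⊆
      ((Finset.range (m + 3)).image (vtx U D p) : Set Pt) := by
    intro t ht
    obtain ⟨h1, h2, h3⟩ := hidx t ht
    rintro x (rfl | rfl | rfl)
    · exact Finset.mem_coe.2 (Finset.mem_image_of_mem _ (Finset.mem_range.2 h1))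
    · exact Finset.mem_coe.2 (Finset.mem_image_of_mem _ (Finset.mem_range.2 h2))
    · exact Finset.mem_coe.2 (Finset.mem_image_of_mem _ (Finset.mem_range.2 h3))
  -- pairwise separation
  have dBU : ∀ k < m, triInt (map3 (vtx U D p) (0, 2, 1)) ∩
      triInt (map3 (vtx U D p) (0, k + 3, k + 2)) = ∅ := by
    intro k hk
    apply disj_of_sep U (p 0) D (h.hA 0 (by omega)).ne <;> simp only [map3, vtx]
    · rw [ori_self1]
    · rw [ori_self2]
    · exact (h.hA 0 (by omega)).le
    · rw [ori_self1]
    · exact hB1 _ _ (by omega) (by omega)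
    · exact hB1 _ _ (by omega) (by omega)
  have dBD : ∀ k < m, triInt (map3 (vtx U D p) (1, k + 2, k + 3)) ∩
      triInt (map3 (vtx U D p) (0, 2, 1)) = ∅ := by
    intro k hk
    apply disj_of_sep D (p 0) U (hA1 0 (by omega)).ne' <;> simp only [map3, vtx]
    · rw [ori_self1]
    · exact hC0 _ _ (by omega) (by omega)
    · exact hC0 _ _ (by omega) (by omega)
    · exact (hA1 0 (by omega)).le
    · rw [ori_self2]
    · rw [ori_self1]
  have dUU : ∀ k l, k < l → l < m → triInt (map3 (vtx U D p) (0, k + 3, k + 2)) ∩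
      triInt (map3 (vtx U D p) (0, l + 3, l + 2)) = ∅ := by
    intro k l hkl hl
    apply disj_of_sep U (p l) D (h.hA l (by omega)).ne <;> simp only [map3, vtx]
    · rw [ori_self1]
    · exact hB0 _ _ (by omega) (by omega)
    · exact hB0 _ _ (by omega) (by omega)
    · rw [ori_self1]
    · exact hB1 _ _ (by omega) (by omega)
    · exact hB1 _ _ (by omega) (by omega)
  have dDD : ∀ k l, k < l → l < m → triInt (map3 (vtx U D p) (1, l + 2, l + 3)) ∩
      triInt (map3 (vtx U D p) (1, k + 2, k + 3)) = ∅ := by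
    intro k l hkl hl
    apply disj_of_sep D (p l) U (hA1 l (by omega)).ne' <;> simp only [map3, vtx]
    · rw [ori_self1]
    · exact hC0 _ _ (by omega) (by omega)
    · exact hC0 _ _ (by omega) (by omega)
    · rw [ori_self1]
    · exact hC1 _ _ (by omega) (by omega)
    · exact hC1 _ _ (by omega) (by omega)
  have dUD : ∀ k < m, ∀ l < m, triInt (map3 (vtx U D p) (1, l + 2, l + 3)) ∩
      triInt (map3 (vtx U D p) (0, k + 3, k + 2)) = ∅ := by
    intro k hk l hl
    rcases lt_trichotomy k l with hlt | rfl | hlt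
    · apply disj_of_sep D (p l) U (hA1 l (by omega)).ne' <;> simp only [map3, vtx]
      · rw [ori_self1]
      · exact hC0 _ _ (by omega) (by omega)
      · exact hC0 _ _ (by omega) (by omega)
      · exact (hA1 l (by omega)).le
      · exact hC1 _ _ (by omega) (by omega)
      · exact hC1 _ _ (by omega) (by omega)
    · have B := h.hB k (k + 1) (by omega) (by omega)
      have C := h.hC k (k + 1) (by omega) (by omega)
      rw [ori_rot] at C
      have B' : 0 < ori (p k) (p (k + 1)) U := by
        rw [ori_rot, ori_rot, ori_swap]; linarith
      apply disj_of_sep (p k) (p (k + 1)) U B'.ne' <;> simp only [map3, vtx]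
      · exact C.le
      · rw [ori_self1]
      · rw [ori_self2]
      · exact B'.le
      · rw [ori_self2]
      · rw [ori_self1]
    · apply disj_of_sep U (p k) D (h.hA k (by omega)).ne <;> simp only [map3, vtx]
      · exact (h.hA k (by omega)).le
      · exact hB0 _ _ (by omega) (by omega)
      · exact hB0 _ _ (by omega) (by omega)
      · rw [ori_self1]
      · exact hB1 _ _ (by omega) (by omega)
      · exact hB1 _ _ (by omega) (by omega)
  refine ⟨⟨(idxFaces m).image (map3 (vtx U D p)), ?_, ?_, ?_, ?_, ?_⟩, rfl⟩
  · intro t ht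
    obtain ⟨s, hs, rfl⟩ := Finset.mem_image.1 ht
    simpa using hverts s hs
  · intro t ht
    obtain ⟨s, hs, rfl⟩ := Finset.mem_image.1 ht
    exact hcw s hs
  · intro t ht x hx hxt
    obtain ⟨s, hs, rfl⟩ := Finset.mem_image.1 ht
    have hc := hcw s hs
    obtain ⟨e1, e2, e3⟩ := (mem_hull_iff hc x).1 hxt
    rcases mem_idxFaces.1 hs with rfl | ⟨k, hk, rfl⟩ | ⟨k, hk, rfl⟩ <;>
      simp only [map3, vtx, triPts] at * <;>
      rcases hv x hx with rfl | rfl | ⟨j, hj, rfl⟩ <;> try (simp; done)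
    · rcases Nat.eq_zero_or_pos j with rfl | hj0
      · simp
      · have := h.hB 0 j hj0 hj
        rw [ori_swap] at this; linarith
    · have := h.hA k (by omega)
      simp only [ori] at *; linarith
    · rcases lt_or_ge j k with hlt | hge
      · have := h.hB j k hlt (by omega)
        simp only [ori] at *; linarith
      · rcases lt_or_ge (k + 1) j with hlt | hge'
        · have := h.hB (k + 1) j hlt (by omega)
          simp only [ori] at *; linarith
        · obtain rfl | rfl : j = k ∨ j = k + 1 := by omega
          · simp
          · simp
    · have := h.hA k (by omega)
      simp only [ori] at *; linarith
    · rcases lt_or_ge j k with hlt | hge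
      · have := h.hC j k hlt (by omega)
        simp only [ori] at *; linarith
      · rcases lt_or_ge (k + 1) j with hlt | hge'
        · have := h.hC (k + 1) j hlt (by omega)
          simp only [ori] at *; linarith
        · obtain rfl | rfl : j = k ∨ j = k + 1 := by omega
          · simp
          · simp
  · intro t ht t' ht' hne
    obtain ⟨s, hs, rfl⟩ := Finset.mem_image.1 ht
    obtain ⟨s', hs', rfl⟩ := Finset.mem_image.1 ht'
    rcases mem_idxFaces.1 hs with rfl | ⟨k, hk, rfl⟩ | ⟨k, hk, rfl⟩ <;>
    rcases mem_idxFaces.1 hs' with rfl | ⟨l, hl, rfl⟩ | ⟨l, hl, rfl⟩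
    · exact absurd rfl hne
    · exact dBU l hl
    · rw [Set.inter_comm]; exact dBD l hl
    · rw [Set.inter_comm]; exact dBU k hk
    · rcases lt_trichotomy k l with hlt | rfl | hlt
      · exact dUU k l hlt hl
      · exact absurd rfl hne
      · rw [Set.inter_comm]; exact dUU l k hlt hk
    · rw [Set.inter_comm]; exact dUD k hk l hl
    · exact dBD k hk
    · exact dUD l hl k hk
    · rcases lt_trichotomy k l with hlt | rfl | hlt
      · rw [Set.inter_comm]; exact dDD k l hlt hl
      · exact absurd rfl hne
      · exact dDD l k hlt hk
  · apply Set.Subset.antisymm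
    · intro q hq
      simp only [Set.mem_iUnion] at hq
      obtain ⟨t, ht, hq⟩ := hq
      obtain ⟨s, hs, rfl⟩ := Finset.mem_image.1 ht
      refine convexHull_mono ?_ hq
      simpa using hverts s hs
    · have hsub : convexHull ℝ (((Finset.range (m + 3)).image (vtx U D p) : Finset Pt) : Set Pt)
          ⊆ triHull (U, p m, D) := by
        apply convexHull_min _ (convex_convexHull _ _)
        intro x hx
        refine (mem_hull_iff (h.hA m le_rfl) x).2 ?_
        have A := h.hA m le_rfl
        rcases hv x hx with rfl | rfl | ⟨j, hj, rfl⟩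
        · simp only [ori] at *
          refine ⟨?_, ?_, ?_⟩ <;> linarith
        · simp only [ori] at *
          refine ⟨?_, ?_, ?_⟩ <;> linarith
        · refine ⟨hB0 j m hj le_rfl, ?_, ?_⟩
          · have := hC0 j m hj le_rfl
            simp only [ori] at *
            linarith
          · have := h.hA j hj
            simp only [ori] at *
            linarith
      intro q hq
      obtain ⟨t, ht, hqt⟩ := h.cover q m le_rfl (hsub hq)
      simp only [Set.mem_iUnion]
      exact ⟨_, Finset.mem_image_of_mem _ ht, hqt⟩

lemma exists_slope (A : Finset Pt) : ∃ e : ℝ, ∀ a ∈ A, ∀ b ∈ A,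
    a 0 + e * a 1 = b 0 + e * b 1 → a = b := by
  obtain ⟨e, he⟩ := Infinite.exists_notMem_finset
    ((A ×ˢ A).image (fun z => -(z.1 0 - z.2 0) / (z.1 1 - z.2 1)))
  refine ⟨e, fun a ha b hb hab => ?_⟩
  by_cases h1 : a 1 = b 1
  · have h0 : a 0 = b 0 := by rw [h1] at hab; linarith
    ext i; fin_cases i
    · exact h0
    · exact h1
  · exfalso
    apply he
    refine Finset.mem_image.2 ⟨(a, b), Finset.mk_mem_product ha hb, ?_⟩
    have : a 1 - b 1 ≠ 0 := sub_ne_zero.2 h1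
    field_simp
    linarith

lemma exists_enum (A : Finset Pt) (m : ℕ) (hA : A.card = m + 1) (f : Pt → ℝ)
    (hf : Set.InjOn f A) : ∃ p : ℕ → Pt, (∀ k l, k < l → l ≤ m → f (p k) < f (p l)) ∧
      ∀ a ∈ A, ∃ k ≤ m, p k = a := by
  have hcard : (A.image f).card = m + 1 := by rw [Finset.card_image_of_injOn hf, hA]
  let g := (A.image f).orderEmbOfFin hcard
  have hg : ∀ i, ∃ a ∈ A, f a = g i := fun i =>
    Finset.mem_image.1 (Finset.orderEmbOfFin_mem _ hcard i)
  choose r hr hfr using hg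
  refine ⟨fun k => r (Fin.ofNat (m + 1) k), ?_, ?_⟩
  · intro k l hkl hl
    simp only [hfr]
    apply g.strictMono
    rw [Fin.lt_def]
    simp only [Fin.ofNat]
    rw [Nat.mod_eq_of_lt (by omega), Nat.mod_eq_of_lt (by omega)]
    exact hkl
  · intro a ha
    have : f a ∈ Set.range g := by
      rw [Finset.range_orderEmbOfFin]
      exact Finset.mem_coe.2 (Finset.mem_image_of_mem _ ha)
    obtain ⟨i, hi⟩ := this
    refine ⟨i, by omega, ?_⟩
    have e : Fin.ofNat (m + 1) (i : ℕ) = i := by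
      ext; simp only [Fin.ofNat]; exact Nat.mod_eq_of_lt i.2
    simp only [e]
    exact hf (hr i) ha (by rw [hfr, hi])

lemma exists_nested (A : Finset Pt) (m : ℕ) (hA : A.card = m + 1) :
    ∃ U D p, Nested U D p m ∧ ∀ a ∈ A, ∃ k ≤ m, p k = a := by
  obtain ⟨e, he⟩ := exists_slope A
  obtain ⟨p, hp, hcov⟩ := exists_enum A m hA (fun a => a 0 + e * a 1)
    (fun a ha b hb hab => he a ha b hb hab)
  simp only at hp
  set c : ℝ := p 0 0 + e * p 0 1 - 1 with hc
  have hcl : ∀ k ≤ m, c < p k 0 + e * p k 1 := by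
    intro k hk
    rcases Nat.eq_zero_or_pos k with rfl | h0
    · linarith
    · have := hp 0 k h0 hk
      linarith
  have ev : ∀ a b d : ℝ, 0 < a → ∀ᶠ M : ℝ in Filter.atTop, b + d < M * a := by
    intro a b d ha
    exact (Filter.tendsto_id.atTop_mul_const ha).eventually_gt_atTop (b + d)
  have hM : ∀ᶠ M : ℝ in Filter.atTop, 0 < M ∧ ∀ k ∈ Finset.range (m + 1), ∀ l ∈ Finset.range (m + 1),
      k < l →
      |(p l 0 + e * p l 1 - c) * p k 1 - p l 1 * (p k 0 + e * p k 1 - c)| <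
        M * ((p l 0 + e * p l 1) - (p k 0 + e * p k 1)) := by
    refine (Filter.eventually_gt_atTop 0).and ?_
    rw [Filter.eventually_all_finset]
    intro k hk
    rw [Filter.eventually_all_finset]
    intro l hl
    by_cases hkl : k < l
    · have := hp k l hkl (by simpa [Nat.lt_succ_iff] using hl)
      have := ev _ (|(p l 0 + e * p l 1 - c) * p k 1 - p l 1 * (p k 0 + e * p k 1 - c)|) 0
        (sub_pos.2 this)
      filter_upwards [this] with M hM _
      linarith
    · exact Filter.Eventually.of_forall fun _ h => absurd h hkl
  obtain ⟨M, hM0, hM⟩ := hM.exists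
  refine ⟨!₂[c - e * M, M], !₂[c + e * M, -M], p, ⟨?_, ?_, ?_⟩, hcov⟩
  · intro k hk
    have := mul_pos hM0 (sub_pos.2 (hcl k hk))
    simp [ori]
    linarith
  · intro k l hkl hl
    have := hM k (by simp; omega) l (by simp; omega) hkl
    have := (abs_lt.1 this).2
    simp [ori]
    linarith
  · intro k l hkl hl
    have := hM k (by simp; omega) l (by simp; omega) hkl
    have := (abs_lt.1 this).1
    simp [ori]
    linarith

lemma exists_universal (S : Finset Pt) (n : ℕ) (hS : S.card = n) :
    ∃ v : ℕ → Pt, Set.InjOn v (Finset.range (n + 3) : Set ℕ) ∧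
      S ⊆ (Finset.range (n + 3)).image v ∧
      ∃ T : Triangulation ((Finset.range (n + 3)).image v),
        T.faces = (idxFaces n).image (map3 v) := by
  obtain ⟨z, hz⟩ := Infinite.exists_notMem_finset S
  obtain ⟨U, D, p, hN, hcov⟩ := exists_nested (insert z S) n
    (by rw [Finset.card_insert_of_notMem hz, hS])
  refine ⟨vtx U D p, hN.inj, ?_, hN.triang⟩
  intro a ha
  obtain ⟨k, hk, rfl⟩ := hcov a (Finset.mem_insert_of_mem ha)
  exact Finset.mem_image.2 ⟨k + 2, by simp; omega, rfl⟩

lemma idx_lt {n : ℕ} {t : ℕ × ℕ × ℕ} (ht : t ∈ idxFaces n) :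
    t.1 < n + 3 ∧ t.2.1 < n + 3 ∧ t.2.2 < n + 3 := by
  rcases mem_idxFaces.1 ht with rfl | ⟨k, hk, rfl⟩ | ⟨k, hk, rfl⟩ <;> simp <;> omega

lemma face_iff {n : ℕ} {v : ℕ → Pt} (hv : Set.InjOn v (Finset.range (n + 3) : Set ℕ))
    {i j k : ℕ} (hi : i < n + 3) (hj : j < n + 3) (hk : k < n + 3) :
    (v i, v j, v k) ∈ (idxFaces n).image (map3 v) ↔ (i, j, k) ∈ idxFaces n := by
  constructor
  · intro h
    obtain ⟨⟨a, b, c⟩, ht, e⟩ := Finset.mem_image.1 h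
    obtain ⟨ha, hb, hc⟩ := idx_lt ht
    simp only [map3, Prod.mk.injEq] at e
    have e1 := hv (by simpa using ha) (by simpa using hi) e.1
    have e2 := hv (by simpa using hb) (by simpa using hj) e.2.1
    have e3 := hv (by simpa using hc) (by simpa using hk) e.2.2
    subst e1 e2 e3
    exact ht
  · intro h
    exact Finset.mem_image.2 ⟨_, h, rfl⟩

/-- Theorem 4.1: any two `n`-point sets in general position can be compatibly
triangulated after adding at most `n/2 + 3` Steiner points to each set
(stated as `2 · #Steiner ≤ n + 6`). -/
theorem compatible_with_half_n_steiner_points (S T : Finset Pt) (n : ℕ)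
    (hS : S.card = n) (hT : T.card = n)
    (hgenS : GenPos (S : Set Pt)) (hgenT : GenPos (T : Set Pt)) :
    ∃ S' T' : Finset Pt, S ⊆ S' ∧ T ⊆ T' ∧
      2 * (S'.card - S.card) ≤ n + 6 ∧ 2 * (T'.card - T.card) ≤ n + 6 ∧
      ∃ (TS : Triangulation S') (TT : Triangulation T'), Compatible TS TT := by
  obtain ⟨v, hv, hSv, TS, hTS⟩ := exists_universal S n hS
  obtain ⟨w, hw, hTw, TT, hTT⟩ := exists_universal T n hT
  have cv : ((Finset.range (n + 3)).image v).card = n + 3 := by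
    rw [Finset.card_image_of_injOn hv, Finset.card_range]
  have cw : ((Finset.range (n + 3)).image w).card = n + 3 := by
    rw [Finset.card_image_of_injOn hw, Finset.card_range]
  refine ⟨_, _, hSv, hTw, by omega, by omega, TS, TT, ?_⟩
  let g := Function.invFunOn v (Finset.range (n + 3) : Set ℕ)
  have hg : ∀ i < n + 3, g (v i) = i := by
    intro i hi
    exact hv.leftInvOn_invFunOn (by simpa using hi)
  refine ⟨fun x => w (g x), ⟨?_, ?_, ?_⟩, ?_⟩
  · intro x hx
    obtain ⟨i, hi, rfl⟩ := Finset.mem_image.1 (Finset.mem_coe.1 hx)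
    simp only [hg i (Finset.mem_range.1 hi)]
    exact Finset.mem_coe.2 (Finset.mem_image_of_mem _ hi)
  · intro x hx y hy hxy
    obtain ⟨i, hi, rfl⟩ := Finset.mem_image.1 (Finset.mem_coe.1 hx)
    obtain ⟨j, hj, rfl⟩ := Finset.mem_image.1 (Finset.mem_coe.1 hy)
    simp only [hg i (Finset.mem_range.1 hi), hg j (Finset.mem_range.1 hj)] at hxy
    rw [hw (Finset.mem_coe.2 hi) (Finset.mem_coe.2 hj) hxy]
  · intro y hy
    obtain ⟨i, hi, rfl⟩ := Finset.mem_image.1 (Finset.mem_coe.1 hy)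
    refine ⟨v i, Finset.mem_coe.2 (Finset.mem_image_of_mem _ hi), ?_⟩
    simp only [hg i (Finset.mem_range.1 hi)]
  · intro a ha b hb c hc
    obtain ⟨i, hi, rfl⟩ := Finset.mem_image.1 ha
    obtain ⟨j, hj, rfl⟩ := Finset.mem_image.1 hb
    obtain ⟨k, hk, rfl⟩ := Finset.mem_image.1 hc
    rw [Finset.mem_range] at hi hj hk
    simp only [IsFace, hTS, hTT, hg i hi, hg j hj, hg k hk, face_iff hv hi hj hk,
      face_iff hv hj hk hi, face_iff hv hk hi hj, face_iff hw hi hj hk,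
      face_iff hw hj hk hi, face_iff hw hk hi hj]
end
end

section
/- For any d point sets S_1, ..., S_d in R^2, each of size n and in general position, one can add at most n/2 + 3 Steiner points to each set so that the d augmented sets admit pairwise compatible (d-way compatible) triangulations; the number of Steiner points per set is independent of d. -/
noncomputable section
open scoped Classical

namespace DWay

/-- Twice the signed area. -/
def D (a b c : Pt) : ℝ := (b 0 - a 0) * (c 1 - a 1) - (b 1 - a 1) * (c 0 - a 0)

lemma cw_iff (a b c : Pt) : cwOriented a b c ↔ D a b c < 0 := Iff.rfl

lemma convex_le (a b : Pt) : Convex ℝ {x | D a b x ≤ 0} := by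
  intro x hx y hy s t hs ht hst
  simp only [Set.mem_ofPred_eq, D, PiLp.add_apply, PiLp.smul_apply, smul_eq_mul] at *
  have ht' : t = 1 - s := by linarith
  subst ht'
  nlinarith [mul_nonneg hs (neg_nonneg.2 hx), mul_nonneg ht (neg_nonneg.2 hy)]

lemma mem_tri {a b c : Pt} (h : D a b c < 0) (x : Pt) :
    x ∈ triHull (a, b, c) ↔ D a b x ≤ 0 ∧ D b c x ≤ 0 ∧ D c a x ≤ 0 := by
  constructor
  · intro hx
    have hsub : triPts (a, b, c) ⊆ {x | D a b x ≤ 0} ∩ ({x | D b c x ≤ 0} ∩ {x | D c a x ≤ 0}) := by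
      intro y hy
      simp only [triPts, Set.mem_insert_iff, Set.mem_singleton_iff] at hy
      simp only [Set.mem_inter_iff, Set.mem_ofPred_eq]
      unfold D at *
      rcases hy with rfl | rfl | rfl <;> refine ⟨?_, ?_, ?_⟩ <;> nlinarith
    exact convexHull_min hsub ((convex_le a b).inter ((convex_le b c).inter (convex_le c a))) hx
  · rintro ⟨h1, h2, h3⟩
    have hx : x = ∑ i : Fin 3, (![D b c x / D a b c, D c a x / D a b c, D a b x / D a b c] i) •
        (![a, b, c] i) := by
      have hne := h.ne
      ext j
      simp only [Fin.sum_univ_three, PiLp.add_apply, PiLp.smul_apply, smul_eq_mul,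
        Matrix.cons_val_zero, Matrix.cons_val_one, Matrix.cons_val]
      field_simp
      unfold D
      fin_cases j <;> simp <;> ring
    rw [hx]
    apply (convex_convexHull ℝ (triPts (a, b, c))).sum_mem
    · intro i _
      fin_cases i
      · exact div_nonneg_of_nonpos h2 h.le
      · exact div_nonneg_of_nonpos h3 h.le
      · exact div_nonneg_of_nonpos h1 h.le
    · have hne := h.ne
      simp only [Fin.sum_univ_three, Matrix.cons_val_zero, Matrix.cons_val_one, Matrix.cons_val]
      field_simp
      unfold D
      ring
    · intro i _
      apply subset_convexHull
      fin_cases i <;> simp [triPts]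

lemma sep {a b : Pt} {U V : Set Pt} (hab : a ≠ b) (hU : ∀ x ∈ U, D a b x ≤ 0)
    (hV : ∀ x ∈ V, 0 ≤ D a b x) : interior U ∩ interior V = ∅ := by
  rw [← interior_inter]
  by_contra hne
  obtain ⟨x, hx⟩ := Set.nonempty_iff_ne_empty.2 hne
  let w : Pt := !₂[-(b 1 - a 1), b 0 - a 0]
  have hcont : Filter.Tendsto (fun s : ℝ => x + s • w) (nhdsWithin 0 (Set.Ioi 0)) (nhds x) := by
    have : Continuous (fun s : ℝ => x + s • w) := by fun_prop
    have h2 := (this.tendsto 0).mono_left (nhdsWithin_le_nhds (s := Set.Ioi (0:ℝ)))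
    simpa using h2
  have hev := hcont.eventually (isOpen_interior.mem_nhds hx)
  obtain ⟨s, hs, hs0⟩ := (hev.and self_mem_nhdsWithin).exists
  have hs0 : 0 < s := hs0
  have h1 := hU _ (interior_subset hs).1
  have h2 := hV _ (interior_subset hx).2
  have h3 : D a b (x + s • w) = D a b x + s * ((b 0 - a 0)^2 + (b 1 - a 1)^2) := by
    simp [D, w]
    ring
  have h4 : (b 0 - a 0)^2 + (b 1 - a 1)^2 ≤ 0 := by
    by_contra hh
    push Not at hh
    have := mul_pos hs0 hh
    linarith
  apply hab
  have e0 : b 0 - a 0 = 0 := by nlinarith [sq_nonneg (b 0 - a 0), sq_nonneg (b 1 - a 1)]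
  have e1 : b 1 - a 1 = 0 := by nlinarith [sq_nonneg (b 0 - a 0), sq_nonneg (b 1 - a 1)]
  ext j
  fin_cases j
  · simp; linarith
  · simp; linarith

lemma D_swap (a b x : Pt) : D b a x = - D a b x := by unfold D; ring
lemma D_rot (a b x : Pt) : D b x a = D a b x := by unfold D; ring
lemma D_left (a b : Pt) : D a b a = 0 := by unfold D; ring
lemma D_right (a b : Pt) : D a b b = 0 := by unfold D; ring
lemma D_same (a b : Pt) : D a a b = 0 := by unfold D; ring

/-- Combinatorial faces. -/
def absF : ℕ → Finset (ℕ × ℕ × ℕ)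
  | 0 => {(0, 2, 1)}
  | k + 1 => insert (0, k + 3, k + 2) (insert (1, k + 2, k + 3) (absF k))

lemma absF_lt (k : ℕ) : ∀ t ∈ absF k, t.1 < k + 3 ∧ t.2.1 < k + 3 ∧ t.2.2 < k + 3 := by
  induction k with
  | zero => simp [absF]
  | succ k ih =>
    intro t ht
    simp only [absF, Finset.mem_insert] at ht
    rcases ht with rfl | rfl | ht
    · simp
    · simp
    · have := ih t ht
      omega

def map3 (φ : ℕ → Pt) (t : ℕ × ℕ × ℕ) : Pt × Pt × Pt := (φ t.1, φ t.2.1, φ t.2.2)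

structure Good (φ : ℕ → Pt) (k : ℕ) : Prop where
  tb : ∀ i ≤ k, D (φ 0) (φ (i + 2)) (φ 1) < 0
  top : ∀ j ≤ k, ∀ i < j, 0 < D (φ 0) (φ (i + 2)) (φ (j + 2))
  bot : ∀ j ≤ k, ∀ i < j, D (φ 1) (φ (i + 2)) (φ (j + 2)) < 0

lemma Good.pred {φ : ℕ → Pt} {k : ℕ} (h : Good φ (k + 1)) : Good φ k :=
  ⟨fun i hi => h.tb i (by omega), fun j hj => h.top j (by omega), fun j hj => h.bot j (by omega)⟩

lemma Good.ne {φ : ℕ → Pt} {k : ℕ} (h : Good φ k) {i j : ℕ} (hij : i < j) (hj : j < k + 3) :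
    φ i ≠ φ j := by
  intro e
  rcases i with _ | _ | i
  · rcases j with _ | _ | j
    · omega
    · have := h.tb 0 (by omega)
      simp only [zero_add] at e
      rw [← e, D_left] at this
      exact lt_irrefl _ this
    · have := h.tb j (by omega)
      rw [← e, D_same] at this
      exact lt_irrefl _ this
  · rcases j with _ | _ | j
    · omega
    · omega
    · have := h.tb j (by omega)
      rw [← e] at this
      simp only [zero_add] at this
      rw [D_right] at this
      exact lt_irrefl _ this
  · rcases j with _ | _ | j
    · omega
    · omega
    · have := h.top j (by omega) i (by omega)
      have e : φ (i + 2) = φ (j + 2) := e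
      rw [e, D_right] at this
      exact lt_irrefl _ this

lemma Good.inj {φ : ℕ → Pt} {k : ℕ} (h : Good φ k) {i j : ℕ} (hi : i < k + 3) (hj : j < k + 3)
    (e : φ i = φ j) : i = j := by
  rcases lt_trichotomy i j with hl | hl | hl
  · exact (h.ne hl hj e).elim
  · exact hl
  · exact (h.ne hl hi e.symm).elim

lemma face_cw {φ : ℕ → Pt} {k : ℕ} (h : Good φ k) :
    ∀ t ∈ absF k, D (φ t.1) (φ t.2.1) (φ t.2.2) < 0 := by
  induction k with
  | zero =>
    intro t ht
    simp only [absF, Finset.mem_singleton] at ht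
    subst ht
    exact h.tb 0 le_rfl
  | succ k ih =>
    intro t ht
    simp only [absF, Finset.mem_insert] at ht
    rcases ht with rfl | rfl | ht
    · have := h.top (k + 1) le_rfl k (by omega)
      unfold D at *
      simp only
      linarith
    · exact h.bot (k + 1) le_rfl k (by omega)
    · exact ih h.pred t ht

/-- one step of stellar subdivision -/
lemma step {T B p q : Pt} (h1 : D T p B < 0) (h2 : D T q B < 0) (h3 : 0 < D T p q)
    (h4 : D B p q < 0) :
    triHull (T, q, B) = triHull (T, q, p) ∪ (triHull (B, p, q) ∪ triHull (T, p, B)) := by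
  have h5 : D T q p < 0 := by unfold D at *; linarith
  ext x
  simp only [Set.mem_union, mem_tri h1, mem_tri h2, mem_tri h4, mem_tri h5]
  have i1 := D_swap T p x
  have i2 := D_swap p B x
  have i3 := D_swap p q x
  have key : D B p q * D T p x + D T p q * D p B x - D T p B * D p q x = 0 := by
    unfold D; ring
  -- expressing outer functionals
  have k1 : D T p q * D T B x = D T p B * D T q x - D T q B * D T p x := by unfold D; ring
  constructor
  · rintro ⟨a1, a2, a3⟩
    have j2 := D_swap q B x
    by_cases c1 : D T p x ≤ 0
    · by_cases c2 : D p B x ≤ 0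
      · exact Or.inr (Or.inr ⟨c1, c2, a3⟩)
      · push Not at c2
        right; left
        refine ⟨by linarith, ?_, by linarith⟩
        by_contra c3
        push Not at c3
        nlinarith [mul_nonneg (neg_nonneg.2 h4.le) (neg_nonneg.2 c1), mul_pos h3 c2,
          mul_pos (neg_pos.2 h1) c3]
    · push Not at c1
      by_cases c3 : D p q x < 0
      · right; left
        refine ⟨?_, by linarith, by linarith⟩
        by_contra c2
        have c2' : D p B x < 0 := by linarith
        nlinarith [mul_pos (neg_pos.2 h4) c1, mul_pos h3 (neg_pos.2 c2'),
          mul_pos (neg_pos.2 h1) (neg_pos.2 c3)]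
      · left
        exact ⟨a1, by linarith, by linarith⟩
  · have vT := (mem_tri h2 T).1 (subset_convexHull ℝ _ (by simp [triPts]))
    have vq := (mem_tri h2 q).1 (subset_convexHull ℝ _ (by simp [triPts]))
    have vB := (mem_tri h2 B).1 (subset_convexHull ℝ _ (by simp [triPts]))
    have vp : D T q p ≤ 0 ∧ D q B p ≤ 0 ∧ D B T p ≤ 0 := by
      refine ⟨h5.le, ?_, ?_⟩
      · unfold D at *; linarith
      · unfold D at *; linarith
    have hs : ∀ t : Pt × Pt × Pt, triPts t ⊆ triHull (T, q, B) → triHull t ⊆ triHull (T, q, B) :=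
      fun t ht => convexHull_min ht (convex_convexHull ℝ _)
    have mT := (mem_tri h2 T).2 vT
    have mq := (mem_tri h2 q).2 vq
    have mB := (mem_tri h2 B).2 vB
    have mp := (mem_tri h2 p).2 vp
    have sub3 : ∀ a b c : Pt, a ∈ triHull (T, q, B) → b ∈ triHull (T, q, B) →
        c ∈ triHull (T, q, B) → triHull (a, b, c) ⊆ triHull (T, q, B) := by
      intro a b c ha hb hc
      apply hs
      intro y hy
      simp only [triPts, Set.mem_insert_iff, Set.mem_singleton_iff] at hy
      rcases hy with rfl | rfl | rfl <;> assumption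
    rintro (hx | hx | hx)
    · exact (mem_tri h2 x).1 (sub3 T q p mT mq mp ((mem_tri h5 x).2 hx))
    · exact (mem_tri h2 x).1 (sub3 B p q mB mp mq ((mem_tri h4 x).2 hx))
    · exact (mem_tri h2 x).1 (sub3 T p B mT mp mB ((mem_tri h1 x).2 hx))

lemma cover_eq {φ : ℕ → Pt} {k : ℕ} (h : Good φ k) :
    (⋃ t ∈ absF k, triHull (map3 φ t)) = triHull (φ 0, φ (k + 2), φ 1) := by
  induction k with
  | zero => simp [absF, map3]
  | succ k ih =>
    rw [step (h.tb k (by omega)) (h.tb (k + 1) le_rfl) (h.top (k + 1) le_rfl k (by omega))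
      (h.bot (k + 1) le_rfl k (by omega)), ← ih h.pred]
    simp only [absF, Finset.mem_insert, Set.iUnion_iUnion_eq_or_left]
    rfl

lemma face_sub {φ : ℕ → Pt} {k : ℕ} (h : Good φ k) (t) (ht : t ∈ absF k) :
    triHull (map3 φ t) ⊆ triHull (φ 0, φ (k + 2), φ 1) := by
  rw [← cover_eq h]
  exact Set.subset_biUnion_of_mem (u := fun t => triHull (map3 φ t)) ht

lemma face_disj {φ : ℕ → Pt} {k : ℕ} (h : Good φ k) :
    ∀ t ∈ absF k, ∀ t' ∈ absF k, t ≠ t' → triInt (map3 φ t) ∩ triInt (map3 φ t') = ∅ := by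
  induction k with
  | zero =>
    intro t ht t' ht' hne
    simp only [absF, Finset.mem_singleton] at ht ht'
    exact (hne (ht.trans ht'.symm)).elim
  | succ k ih =>
    have g1 := h.tb k (by omega)
    have g3 := h.top (k + 1) le_rfl k (by omega)
    have g4 := h.bot (k + 1) le_rfl k (by omega)
    have g5 : D (φ 0) (φ (k + 3)) (φ (k + 2)) < 0 := by unfold D at *; linarith
    have hA : triInt (map3 φ (0, k + 3, k + 2)) ∩ triInt (map3 φ (1, k + 2, k + 3)) = ∅ := by
      refine sep (a := φ (k + 3)) (b := φ (k + 2)) (h.ne (by omega) (by omega)).symm ?_ ?_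
      · intro x hx
        exact ((mem_tri g5 x).1 hx).2.1
      · intro x hx
        rw [D_swap]
        exact neg_nonneg.2 ((mem_tri g4 x).1 hx).2.1
    have hB : ∀ t ∈ absF k, triInt (map3 φ t) ∩ triInt (map3 φ (0, k + 3, k + 2)) = ∅ := by
      intro t ht
      refine sep (a := φ 0) (b := φ (k + 2)) (h.ne (by omega) (by omega)) ?_ ?_
      · intro x hx
        exact ((mem_tri g1 x).1 (face_sub h.pred t ht hx)).1
      · intro x hx
        have := ((mem_tri g5 x).1 hx).2.2
        rw [D_swap] at this
        linarith
    have hC : ∀ t ∈ absF k, triInt (map3 φ t) ∩ triInt (map3 φ (1, k + 2, k + 3)) = ∅ := by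
      intro t ht
      refine sep (a := φ (k + 2)) (b := φ 1) (h.ne (by omega) (by omega)).symm ?_ ?_
      · intro x hx
        exact ((mem_tri g1 x).1 (face_sub h.pred t ht hx)).2.1
      · intro x hx
        have := ((mem_tri g4 x).1 hx).1
        rw [D_swap] at this
        linarith
    intro t ht t' ht' hne
    simp only [absF, Finset.mem_insert] at ht ht'
    rcases ht with rfl | rfl | ht <;> rcases ht' with rfl | rfl | ht'
    · exact (hne rfl).elim
    · exact hA
    · rw [Set.inter_comm]; exact hB _ ht'
    · rw [Set.inter_comm]; exact hA
    · exact (hne rfl).elim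
    · rw [Set.inter_comm]; exact hC _ ht'
    · exact hB _ ht
    · exact hC _ ht
    · exact ih h.pred t ht t' ht' hne

lemma pt_mem {φ : ℕ → Pt} {k : ℕ} (h : Good φ k) (i : ℕ) (hi : i < k + 3) :
    φ i ∈ triHull (φ 0, φ (k + 2), φ 1) := by
  rcases i with _ | _ | i
  · exact subset_convexHull ℝ _ (by simp [triPts])
  · exact subset_convexHull ℝ _ (by simp [triPts])
  · rcases (show i ≤ k by omega).eq_or_lt with rfl | hl
    · exact subset_convexHull ℝ _ (by simp [triPts])
    · have h1 := h.tb k le_rfl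
      have h2 := h.tb i hl.le
      have h3 := h.top k le_rfl i hl
      have h4 := h.bot k le_rfl i hl
      rw [mem_tri h1]
      change D _ _ (φ (i + 2)) ≤ 0 ∧ D _ _ (φ (i + 2)) ≤ 0 ∧ D _ _ (φ (i + 2)) ≤ 0
      unfold D at *
      refine ⟨?_, ?_, ?_⟩ <;> linarith

lemma face_empty {φ : ℕ → Pt} {k : ℕ} (h : Good φ k) :
    ∀ t ∈ absF k, ∀ i < k + 3, φ i ∈ triHull (map3 φ t) → φ i ∈ triPts (map3 φ t) := by
  induction k with
  | zero =>
    intro t ht i hi _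
    simp only [absF, Finset.mem_singleton] at ht
    subst ht
    interval_cases i <;> simp [triPts, map3]
  | succ k ih =>
    have g1 := h.tb k (by omega)
    have g3 := h.top (k + 1) le_rfl k (by omega)
    have g4 := h.bot (k + 1) le_rfl k (by omega)
    have g5 : D (φ 0) (φ (k + 3)) (φ (k + 2)) < 0 := by unfold D at *; linarith
    intro t ht i hi hx
    simp only [absF, Finset.mem_insert] at ht
    rcases ht with rfl | rfl | ht
    · have := ((mem_tri g5 _).1 hx).2.2
      rcases i with _ | _ | i
      · simp [triPts, map3]
      · simp only [zero_add] at this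
        unfold D at *; linarith
      · rcases lt_trichotomy i k with hl | rfl | hl
        · have := h.top k (by omega) i hl
          change D _ _ (φ (i + 2)) ≤ 0 at *
          unfold D at *; linarith
        · simp [triPts, map3]
        · obtain rfl : i = k + 1 := by omega
          simp [triPts, map3]
    · have := ((mem_tri g4 _).1 hx).1
      rcases i with _ | _ | i
      · unfold D at *; linarith
      · simp [triPts, map3]
      · rcases lt_trichotomy i k with hl | rfl | hl
        · have := h.bot k (by omega) i hl
          change D _ _ (φ (i + 2)) ≤ 0 at *
          unfold D at *; linarith
        · simp [triPts, map3]
        · obtain rfl : i = k + 1 := by omega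
          simp [triPts, map3]
    · rcases (show i ≤ k + 3 by omega).eq_or_lt with rfl | hl
      · have := ((mem_tri g1 _).1 (face_sub h.pred t ht hx)).1
        have g3 : 0 < D (φ 0) (φ (k + 2)) (φ (k + 3)) := g3
        linarith
      · exact ih h.pred t ht i hl hx

def verts (φ : ℕ → Pt) (k : ℕ) : Finset Pt := (Finset.range (k + 3)).image φ

/-- The triangulation. -/
def triang (φ : ℕ → Pt) (k : ℕ) (h : Good φ k) : Triangulation (verts φ k) where
  faces := (absF k).image (map3 φ)
  verts_mem := by
    intro t ht
    obtain ⟨s, hs, rfl⟩ := Finset.mem_image.1 ht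
    obtain ⟨h1, h2, h3⟩ := absF_lt k s hs
    have hm : ∀ i < k + 3, φ i ∈ (verts φ k : Set Pt) := fun i hi =>
      Finset.mem_coe.2 (Finset.mem_image_of_mem _ (Finset.mem_range.2 hi))
    intro y hy
    simp only [triPts, map3, Set.mem_insert_iff, Set.mem_singleton_iff] at hy
    rcases hy with rfl | rfl | rfl
    · exact hm _ h1
    · exact hm _ h2
    · exact hm _ h3
  cw_face := by
    intro t ht
    obtain ⟨s, hs, rfl⟩ := Finset.mem_image.1 ht
    exact face_cw h s hs
  empty_face := by
    intro t ht p hp hx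
    obtain ⟨s, hs, rfl⟩ := Finset.mem_image.1 ht
    obtain ⟨i, hi, rfl⟩ := Finset.mem_image.1 hp
    exact face_empty h s hs i (Finset.mem_range.1 hi) hx
  disj := by
    intro t ht t' ht' hne
    obtain ⟨s, hs, rfl⟩ := Finset.mem_image.1 ht
    obtain ⟨s', hs', rfl⟩ := Finset.mem_image.1 ht'
    exact face_disj h s hs s' hs' (fun e => hne (by rw [e]))
  cover := by
    rw [Finset.set_biUnion_finset_image, cover_eq h]
    apply Set.Subset.antisymm
    · apply convexHull_mono
      intro y hy
      simp only [triPts, Set.mem_insert_iff, Set.mem_singleton_iff] at hy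
      simp only [verts, Finset.coe_image, Finset.coe_range]
      rcases hy with rfl | rfl | rfl
      · exact ⟨0, by simp, rfl⟩
      · exact ⟨k + 2, by simp, rfl⟩
      · exact ⟨1, by simp, rfl⟩
    · apply convexHull_min _ (convex_convexHull ℝ _)
      intro y hy
      obtain ⟨i, hi, rfl⟩ := Finset.mem_image.1 (Finset.mem_coe.1 hy)
      exact pt_mem h i (Finset.mem_range.1 hi)

lemma mem_faces {φ : ℕ → Pt} {k : ℕ} (h : Good φ k) {a b c : ℕ} (ha : a < k + 3) (hb : b < k + 3)
    (hc : c < k + 3) : (φ a, φ b, φ c) ∈ (triang φ k h).faces ↔ (a, b, c) ∈ absF k := by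
  constructor
  · intro hm
    obtain ⟨⟨a', b', c'⟩, hs, e⟩ := Finset.mem_image.1 hm
    obtain ⟨h1, h2, h3⟩ := absF_lt k _ hs
    simp only [map3, Prod.mk.injEq] at e
    rw [← h.inj h1 ha e.1, ← h.inj h2 hb e.2.1, ← h.inj h3 hc e.2.2]
    exact hs
  · intro hm
    exact Finset.mem_image.2 ⟨_, hm, rfl⟩

lemma compat {φ ψ : ℕ → Pt} {k : ℕ} (h : Good φ k) (g : Good ψ k) :
    Compatible (triang φ k h) (triang ψ k g) := by
  have hinj : Set.InjOn φ (Finset.range (k + 3) : Set ℕ) := by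
    intro i hi j hj e
    exact h.inj (by simpa using hi) (by simpa using hj) e
  let f : Pt → Pt := fun x => ψ (Function.invFunOn φ (Finset.range (k + 3) : Set ℕ) x)
  have hf : ∀ i < k + 3, f (φ i) = ψ i := by
    intro i hi
    have := hinj.leftInvOn_invFunOn (show i ∈ (Finset.range (k + 3) : Set ℕ) by simpa using hi)
    simp only [f, this]
  refine ⟨f, ⟨?_, ?_, ?_⟩, ?_⟩
  · intro x hx
    obtain ⟨i, hi, rfl⟩ := Finset.mem_image.1 (Finset.mem_coe.1 hx)
    rw [hf i (Finset.mem_range.1 hi)]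
    exact Finset.mem_coe.2 (Finset.mem_image_of_mem _ hi)
  · intro x hx y hy e
    obtain ⟨i, hi, rfl⟩ := Finset.mem_image.1 (Finset.mem_coe.1 hx)
    obtain ⟨j, hj, rfl⟩ := Finset.mem_image.1 (Finset.mem_coe.1 hy)
    rw [Finset.mem_range] at hi hj
    rw [hf i hi, hf j hj] at e
    rw [g.inj hi hj e]
  · intro y hy
    obtain ⟨i, hi, rfl⟩ := Finset.mem_image.1 (Finset.mem_coe.1 hy)
    exact ⟨φ i, Finset.mem_coe.2 (Finset.mem_image_of_mem _ hi), hf i (Finset.mem_range.1 hi)⟩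
  · intro a ha b hb c hc
    obtain ⟨i, hi, rfl⟩ := Finset.mem_image.1 ha
    obtain ⟨j, hj, rfl⟩ := Finset.mem_image.1 hb
    obtain ⟨l, hl, rfl⟩ := Finset.mem_image.1 hc
    rw [Finset.mem_range] at hi hj hl
    rw [hf i hi, hf j hj, hf l hl]
    unfold IsFace
    rw [mem_faces h hi hj hl, mem_faces h hj hl hi, mem_faces h hl hi hj,
      mem_faces g hi hj hl, mem_faces g hj hl hi, mem_faces g hl hi hj]

lemma exists_good (S : Finset Pt) (k : ℕ) (hS : S.card = k + 1) :
    ∃ φ : ℕ → Pt, Good φ k ∧ S ⊆ verts φ k := by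
  obtain ⟨ε, hε⟩ := Infinite.exists_notMem_finset
    ((S ×ˢ S).image (fun z : Pt × Pt => -(z.1 0 - z.2 0) / (z.1 1 - z.2 1)))
  let u : Pt → ℝ := fun p => p 0 + ε * p 1
  have hu : Set.InjOn u S := by
    intro p hp q hq e
    simp only [u] at e
    have e1 : p 1 = q 1 := by
      by_contra hne
      apply hε
      refine Finset.mem_image.2 ⟨(p, q), Finset.mem_product.2 ⟨hp, hq⟩, ?_⟩
      have : p 1 - q 1 ≠ 0 := sub_ne_zero.2 hne
      simp only
      field_simp
      linarith
    have e0 : p 0 = q 0 := by rw [e1] at e; linarith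
    ext j
    fin_cases j
    · exact e0
    · exact e1
  have hcard : (S.image u).card = k + 1 := by rw [Finset.card_image_of_injOn hu, hS]
  let o := (S.image u).orderEmbOfFin hcard
  have ho : ∀ i, ∃ p ∈ S, u p = o i := fun i =>
    Finset.mem_image.1 (Finset.orderEmbOfFin_mem (S.image u) hcard i)
  choose p hpS hpu using ho
  obtain ⟨c, hc⟩ : ∃ c : ℝ, ∀ x ∈ S, c < u x := by
    obtain ⟨m, hm⟩ := Finset.exists_le ((S.image u).image (fun x => -x))
    refine ⟨-m - 1, fun x hx => ?_⟩
    have := hm (-(u x)) (Finset.mem_image_of_mem _ (Finset.mem_image_of_mem _ hx))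
    linarith
  obtain ⟨M, hM0, hM⟩ : ∃ M : ℝ, 0 < M ∧ ∀ a ∈ S, ∀ b ∈ S, u a < u b →
      |(u a - c) * b 1 - a 1 * (u b - c)| < M * (u b - u a) := by
    obtain ⟨m, hm⟩ := Finset.exists_le (insert 0 ((S ×ˢ S).image (fun z : Pt × Pt =>
      |(u z.1 - c) * z.2 1 - z.1 1 * (u z.2 - c)| / (u z.2 - u z.1))))
    have hm0 := hm 0 (Finset.mem_insert_self _ _)
    refine ⟨m + 1, by linarith, fun a ha b hb hab => ?_⟩
    have := hm _ (Finset.mem_insert_of_mem (Finset.mem_image_of_mem _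
      (Finset.mem_product.2 ⟨ha, hb⟩ : (a, b) ∈ S ×ˢ S)))
    have hpos : 0 < u b - u a := by linarith
    rw [← div_lt_iff₀ hpos]
    simp only at this
    linarith
  let T : Pt := !₂[c - ε * M, M]
  let B : Pt := !₂[c + ε * M, -M]
  have dT : ∀ a b, D T a b = M * (u b - u a) + ((u a - c) * b 1 - a 1 * (u b - c)) := by
    intro a b
    simp [D, T, u]
    ring
  have dB : ∀ a b, D B a b = -(M * (u b - u a)) + ((u a - c) * b 1 - a 1 * (u b - c)) := by
    intro a b
    simp [D, B, u]
    ring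
  have dTB : ∀ a, D T a B = -(2 * M * (u a - c)) := by
    intro a
    simp [D, T, B, u]
    ring
  let φ : ℕ → Pt := fun m => match m with
    | 0 => T
    | 1 => B
    | m + 2 => if hm : m < k + 1 then p ⟨m, hm⟩ else 0
  have hφ : ∀ m (hm : m < k + 1), φ (m + 2) = p ⟨m, hm⟩ := by
    intro m hm
    exact dif_pos hm
  have hmono : ∀ i j (hi : i < k + 1) (hj : j < k + 1), i < j → u (p ⟨i, hi⟩) < u (p ⟨j, hj⟩) := by
    intro i j hi hj hij
    rw [hpu, hpu]
    exact o.strictMono hij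
  refine ⟨φ, ⟨?_, ?_, ?_⟩, ?_⟩
  · intro i hi
    rw [hφ i (by omega)]
    change D T _ B < 0
    rw [dTB]
    have := mul_pos hM0 (sub_pos.2 (hc _ (hpS ⟨i, by omega⟩)))
    linarith
  · intro j hj i hij
    rw [hφ i (by omega), hφ j (by omega)]
    change 0 < D T _ _
    rw [dT]
    have := hM _ (hpS ⟨i, by omega⟩) _ (hpS ⟨j, by omega⟩) (hmono i j (by omega) (by omega) hij)
    have := (abs_lt.1 this).1
    linarith
  · intro j hj i hij
    rw [hφ i (by omega), hφ j (by omega)]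
    change D B _ _ < 0
    rw [dB]
    have := hM _ (hpS ⟨i, by omega⟩) _ (hpS ⟨j, by omega⟩) (hmono i j (by omega) (by omega) hij)
    have := (abs_lt.1 this).2
    linarith
  · intro x hx
    have hx' : u x ∈ Set.range o := by
      rw [Finset.range_orderEmbOfFin]
      exact Finset.mem_coe.2 (Finset.mem_image_of_mem _ hx)
    obtain ⟨i, hi⟩ := hx'
    have : p i = x := hu (hpS i) hx (by rw [hpu, hi])
    refine Finset.mem_image.2 ⟨i + 2, ?_, ?_⟩
    · have := i.2
      rw [Finset.mem_range]; omega
    · rw [hφ i i.2, ← this]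

end DWay

/-- Theorem 5.2: any `d` point sets of size `n` in general position admit `d`-way
(pairwise) compatible triangulations after adding at most `n/2 + 3` Steiner
points to each set; the number of Steiner points is independent of `d`. -/
theorem dway_compatible_with_half_n_steiner_points (d n : ℕ) (S : Fin d → Finset Pt)
    (hcard : ∀ i, (S i).card = n) (hgen : ∀ i, GenPos ((S i : Set Pt))) :
    ∃ S' : Fin d → Finset Pt,
      (∀ i, S i ⊆ S' i) ∧
      (∀ i, 2 * ((S' i).card - (S i).card) ≤ n + 6) ∧
      ∃ T : ∀ i, Triangulation (S' i), ∀ i j, Compatible (T i) (T j) := by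
  rcases n with _ | k
  · have hS : ∀ i, S i = ∅ := fun i => Finset.card_eq_zero.1 (hcard i)
    refine ⟨S, fun i => Finset.Subset.refl _, fun i => by simp, fun i =>
      { faces := ∅, verts_mem := by simp, cw_face := by simp, empty_face := by simp,
        disj := by simp, cover := by simp [hS i] }, fun i j => ⟨id, ?_, ?_⟩⟩
    · rw [hS i, hS j]; exact Set.bijOn_id _
    · intro a ha
      simp [hS i] at ha
  · choose φ hg hsub using fun i => DWay.exists_good (S i) k (hcard i)
    refine ⟨fun i => DWay.verts (φ i) k, hsub, fun i => ?_,
      fun i => DWay.triang (φ i) k (hg i), fun i j => DWay.compat (hg i) (hg j)⟩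
    have h1 : (DWay.verts (φ i) k).card ≤ k + 3 := by
      have := Finset.card_image_le (s := Finset.range (k + 3)) (f := φ i)
      simpa [DWay.verts] using this
    have h2 := hcard i
    simp only
    omega
end
end

section
/- There exist three point sets in the plane, each with 7 points and convex hulls of equal size, that admit no 3-way compatible triangulation without Steiner points. -/
noncomputable section
open scoped Classical

/-! ### Elementary plane geometry -/

/-- Signed area determinant. -/
def rdet (a b c : Pt) : ℝ :=
  (b 0 - a 0) * (c 1 - a 1) - (b 1 - a 1) * (c 0 - a 0)

lemma rdet_combo (a b x y : Pt) (s t : ℝ) (h : s + t = 1) :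
    rdet a b (s • x + t • y) = s * rdet a b x + t * rdet a b y := by
  have : t = 1 - s := by linarith
  subst this
  simp [rdet]
  ring

lemma hull_subset_halfplane (A : Set Pt) (a b : Pt) (h : ∀ x ∈ A, rdet a b x ≤ 0) :
    ∀ x ∈ convexHull ℝ A, rdet a b x ≤ 0 := by
  have hc : Convex ℝ {x : Pt | rdet a b x ≤ 0} := by
    intro x hx y hy s t hs ht hst
    simp only [Set.mem_ofPred_eq] at *
    rw [rdet_combo a b x y s t hst]
    nlinarith [mul_nonneg hs (neg_nonneg.2 hx), mul_nonneg ht (neg_nonneg.2 hy)]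
  intro x hx
  exact convexHull_min h hc hx

/-- Weak containment in a clockwise triangle. -/
def inClosed (a b c x : Pt) : Prop := rdet a b x ≤ 0 ∧ rdet b c x ≤ 0 ∧ rdet c a x ≤ 0

/-- Strict containment in a clockwise triangle. -/
def inOpen (a b c x : Pt) : Prop := rdet a b x < 0 ∧ rdet b c x < 0 ∧ rdet c a x < 0

lemma rdet_self_left (a b : Pt) : rdet a b a = 0 := by simp [rdet]
lemma rdet_self_right (a b : Pt) : rdet a b b = 0 := by simp [rdet]; ring
lemma rdet_rot (a b c : Pt) : rdet b c a = rdet a b c := by simp [rdet]; ring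

lemma inClosed_of_mem (a b c x : Pt) (h : rdet a b c < 0) (hx : x ∈ triHull (a, b, c)) :
    inClosed a b c x := by
  have h2 : rdet b c a < 0 := by rw [rdet_rot]; exact h
  have h3 : rdet c a b < 0 := by rw [rdet_rot]; exact h2
  refine ⟨?_, ?_, ?_⟩ <;>
  · refine hull_subset_halfplane _ _ _ ?_ x hx
    intro y hy
    simp only [triPts, Set.mem_insert_iff, Set.mem_singleton_iff] at hy
    rcases hy with rfl | rfl | rfl <;> simp [rdet_self_left, rdet_self_right, h.le, h2.le, h3.le]

lemma mem_of_inClosed (a b c x : Pt) (h : rdet a b c < 0) (hx : inClosed a b c x) :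
    x ∈ triHull (a, b, c) := by
  obtain ⟨h1, h2, h3⟩ := hx
  have key : x = ∑ i : Fin 3, (![rdet b c x / rdet a b c, rdet c a x / rdet a b c,
      rdet a b x / rdet a b c] i) • (![a, b, c] i) := by
    have hne : rdet a b c ≠ 0 := h.ne
    simp only [Fin.sum_univ_three, Matrix.cons_val_zero, Matrix.cons_val_one, Matrix.cons_val]
    ext i
    fin_cases i
    · simp only [PiLp.add_apply, PiLp.smul_apply, smul_eq_mul, Fin.zero_eta]
      field_simp
      simp only [rdet]
      ring
    · simp only [PiLp.add_apply, PiLp.smul_apply, smul_eq_mul, Fin.mk_one]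
      field_simp
      simp only [rdet]
      ring
  rw [key]
  refine (convex_convexHull ℝ _).sum_mem ?_ ?_ ?_
  · intro i _
    fin_cases i
    · exact div_nonneg_of_nonpos h2 h.le
    · exact div_nonneg_of_nonpos h3 h.le
    · exact div_nonneg_of_nonpos h1 h.le
  · simp only [Fin.sum_univ_three, Matrix.cons_val_zero, Matrix.cons_val_one, Matrix.cons_val]
    have hne : rdet a b c ≠ 0 := h.ne
    field_simp
    simp only [rdet]
    ring
  · intro i _
    apply subset_convexHull
    fin_cases i <;> simp [triPts]

lemma mem_interior_of_inOpen (a b c x : Pt) (h : rdet a b c < 0) (hx : inOpen a b c x) :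
    x ∈ triInt (a, b, c) := by
  have ho : IsOpen {y : Pt | inOpen a b c y} := by
    have hcont : ∀ u v : Pt, Continuous fun y : Pt => rdet u v y := by
      intro u v
      unfold rdet
      fun_prop
    exact (isOpen_lt (hcont a b) continuous_const).inter
      ((isOpen_lt (hcont b c) continuous_const).inter (isOpen_lt (hcont c a) continuous_const))
  refine mem_interior.2 ⟨_, ?_, ho, hx⟩
  intro y hy
  exact mem_of_inClosed a b c y h ⟨hy.1.le, hy.2.1.le, hy.2.2.le⟩

lemma rdet_eq_zero_of_collinear (a b c : Pt) (h : Collinear ℝ ({a, b, c} : Set Pt)) :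
    rdet a b c = 0 := by
  obtain ⟨v, hv⟩ := (collinear_iff_of_mem (p₀ := a) (by simp)).1 h
  obtain ⟨r, hr⟩ := hv b (by simp)
  obtain ⟨s, hs⟩ := hv c (by simp)
  subst hr hs
  simp [rdet]
  ring

/-- A point on a supporting line of `A` is not in the interior of the hull. -/
lemma not_mem_interior (A : Set Pt) (a b p q : Pt) (h : ∀ x ∈ A, rdet a b x ≤ 0)
    (hp : rdet a b p = 0) (hq : rdet a b q < 0) : p ∉ interior (convexHull ℝ A) := by
  intro hpint
  have hcont : Continuous fun s : ℝ => (1 + s) • p + (-s) • q := by fun_prop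
  have hmem : (fun s : ℝ => (1 + s) • p + (-s) • q) ⁻¹' interior (convexHull ℝ A) ∈
      nhds (0 : ℝ) := by
    apply hcont.continuousAt.preimage_mem_nhds
    apply isOpen_interior.mem_nhds
    simpa using hpint
  obtain ⟨ε, hε, hball⟩ := Metric.mem_nhds_iff.1 hmem
  have h1 : (ε / 2) ∈ Metric.ball (0 : ℝ) ε := by
    simp [abs_of_pos hε, hε]
  have h2 := interior_subset (hball h1)
  have h3 := hull_subset_halfplane A a b h _ h2
  rw [rdet_combo a b p q _ _ (by ring), hp] at h3
  nlinarith

/-! ### Integer points -/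

/-- Embed integer points. -/
def emb (q : ℤ × ℤ) : Pt := !₂[(q.1 : ℝ), (q.2 : ℝ)]

/-- Integer determinant. -/
def zdet (a b c : ℤ × ℤ) : ℤ :=
  (b.1 - a.1) * (c.2 - a.2) - (b.2 - a.2) * (c.1 - a.1)

lemma rdet_emb (a b c : ℤ × ℤ) : rdet (emb a) (emb b) (emb c) = (zdet a b c : ℝ) := by
  simp [rdet, emb, zdet]

/-- Weak containment, integer version. -/
def zClosed (a b c x : ℤ × ℤ) : Prop := zdet a b x ≤ 0 ∧ zdet b c x ≤ 0 ∧ zdet c a x ≤ 0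

/-- Strict containment, integer version. -/
def zOpen (a b c x : ℤ × ℤ) : Prop := zdet a b x < 0 ∧ zdet b c x < 0 ∧ zdet c a x < 0

instance (a b c x : ℤ × ℤ) : Decidable (zClosed a b c x) := by unfold zClosed; infer_instance
instance (a b c x : ℤ × ℤ) : Decidable (zOpen a b c x) := by unfold zOpen; infer_instance

lemma inClosed_emb (a b c x : ℤ × ℤ) :
    inClosed (emb a) (emb b) (emb c) (emb x) ↔ zClosed a b c x := by
  simp [inClosed, zClosed, rdet_emb]

lemma inOpen_emb (a b c x : ℤ × ℤ) :
    inOpen (emb a) (emb b) (emb c) (emb x) ↔ zOpen a b c x := by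
  simp [inOpen, zOpen, rdet_emb]

lemma emb_injective : Function.Injective emb := by
  intro a b h
  have h0 : emb a 0 = emb b 0 := by rw [h]
  have h1 : emb a 1 = emb b 1 := by rw [h]
  simp [emb] at h0 h1
  exact Prod.ext h0 h1

/-! ### The exhaustive search -/

/-- Branch over the triangles covering each test point.  An entry of `tab` is a triangle code
together with the bit mask of the test points it contains; `M` is the mask of the covered test
points. -/
def search (tab : List (ℕ × ℕ)) (leaf : List (ℕ × ℕ) → Bool) :
    List ℕ → List (ℕ × ℕ) → ℕ → Bool
  | [], ch, M => (tab.all fun t => ch.elem t || !((t.2 &&& M) == 0)) && leaf ch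
  | m :: ms, ch, M =>
    bif M.testBit m then search tab leaf ms ch M
    else tab.all fun t =>
      !(t.2.testBit m) || (!((t.2 &&& M) == 0) || search tab leaf ms (t :: ch) (M ||| t.2))

lemma exists_common_bit (a b : ℕ) (h : (a &&& b) ≠ 0) :
    ∃ i, a.testBit i = true ∧ b.testBit i = true := by
  obtain ⟨i, hi⟩ := Nat.exists_testBit_of_ne_zero h
  rw [Nat.testBit_and, Bool.and_eq_true] at hi
  exact ⟨i, hi⟩

lemma search_sound (tab : List (ℕ × ℕ)) (leaf : List (ℕ × ℕ) → Bool) (G : ℕ × ℕ → Prop)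
    (hG : ∀ t, G t → t ∈ tab)
    (hdis : ∀ t t' i, G t → G t' → t.2.testBit i = true → t'.2.testBit i = true → t = t') :
    ∀ (ms : List ℕ) (ch : List (ℕ × ℕ)) (M : ℕ),
      (∀ m ∈ ms, ∃ t, G t ∧ t.2.testBit m = true) →
      (∀ t ∈ ch, G t) →
      (∀ t ∈ ch, ∀ i, t.2.testBit i = true → M.testBit i = true) →
      (∀ i, M.testBit i = true → ∃ t ∈ ch, t.2.testBit i = true) →
      search tab leaf ms ch M = true →
      ∃ ch', (∀ t, G t ↔ t ∈ ch') ∧ leaf ch' = true := by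
  intro ms
  induction ms with
  | nil =>
    intro ch M _ h1 _ h3 hs
    simp only [search, Bool.and_eq_true, List.all_eq_true, Bool.or_eq_true] at hs
    refine ⟨ch, fun t => ⟨fun ht => ?_, h1 t⟩, hs.2⟩
    rcases hs.1 t (hG t ht) with h | h
    · simpa using h
    · have h' : (t.2 &&& M) ≠ 0 := by simpa using h
      obtain ⟨i, hi, hi'⟩ := exists_common_bit _ _ h'
      obtain ⟨t', ht', hb⟩ := h3 i hi'
      rw [hdis t t' i ht (h1 t' ht') hi hb]
      exact ht'
  | cons m ms ih =>
    intro ch M h0 h1 h2 h3 hs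
    have h0' : ∀ m ∈ ms, ∃ t, G t ∧ t.2.testBit m = true :=
      fun m' hm' => h0 m' (List.mem_cons_of_mem _ hm')
    rw [search] at hs
    cases hM : M.testBit m with
    | true =>
      rw [hM, cond_true] at hs
      exact ih ch M h0' h1 h2 h3 hs
    | false =>
      rw [hM, cond_false] at hs
      obtain ⟨t, ht, hb⟩ := h0 m (by simp)
      have := (List.all_eq_true.1 hs) t (hG t ht)
      rw [Bool.or_eq_true, Bool.or_eq_true] at this
      rcases this with h | h | h
      · rw [hb] at h; simp at h
      · have h' : (t.2 &&& M) ≠ 0 := by simpa using h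
        obtain ⟨i, hi, hi'⟩ := exists_common_bit _ _ h'
        obtain ⟨t', ht', hb'⟩ := h3 i hi'
        have he := hdis t t' i ht (h1 t' ht') hi hb'
        subst he
        have := h2 t ht' m hb
        rw [hM] at this
        simp at this
      · refine ih (t :: ch) (M ||| t.2) h0' ?_ ?_ ?_ h
        · intro s hs'
          rcases List.mem_cons.1 hs' with rfl | hs'
          · exact ht
          · exact h1 s hs'
        · intro s hs' i hi
          rw [Nat.testBit_or, Bool.or_eq_true]
          rcases List.mem_cons.1 hs' with rfl | hs'
          · exact Or.inr hi
          · exact Or.inl (h2 s hs' i hi)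
        · intro i hi
          rw [Nat.testBit_or, Bool.or_eq_true] at hi
          rcases hi with hi | hi
          · obtain ⟨s, hs', hb'⟩ := h3 i hi
            exact ⟨s, List.mem_cons_of_mem _ hs', hb'⟩
          · exact ⟨t, by simp, hi⟩

/-! ### Invariants of an abstract face relation -/

/-- Number of faces at `i`. -/
def fdeg (f : Fin 7 → Fin 7 → Fin 7 → Bool) (i : Fin 7) : ℕ :=
  (Finset.univ.filter fun q : Fin 7 × Fin 7 => f i q.1 q.2 = true).card

/-- Number of vertices with exactly `d` faces. -/
def hist (f : Fin 7 → Fin 7 → Fin 7 → Bool) (d : ℕ) : ℕ :=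
  (Finset.univ.filter fun i : Fin 7 => fdeg f i = d).card

lemma hist_perm (f g : Fin 7 → Fin 7 → Fin 7 → Bool) (σ : Equiv.Perm (Fin 7))
    (h : ∀ i j k, f i j k = g (σ i) (σ j) (σ k)) (d : ℕ) : hist f d = hist g d := by
  have hd : ∀ i, fdeg f i = fdeg g (σ i) := by
    intro i
    refine Finset.card_equiv (Equiv.prodCongr σ σ) ?_
    intro q
    simp [h]
  refine Finset.card_equiv σ ?_
  intro i
  simp [hd]

/-- Code of an ordered triple. -/
def code (i j k : Fin 7) : ℕ := 49 * i.val + 7 * j.val + k.val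

/-- Face relation of a list of coded triangles. -/
def faceOf (ch : List (ℕ × ℕ)) (i j k : Fin 7) : Bool :=
  ch.any fun t => t.1 == code i j k || (t.1 == code j k i || t.1 == code k i j)

/-- Test of a list of triangles against a condition on two histogram values. -/
def leafTest (q : ℕ → ℕ → Bool) (ch : List (ℕ × ℕ)) : Bool :=
  q (hist (faceOf ch) 2) (hist (faceOf ch) 4)

/-- All finite checks that we need about a concrete configuration. -/
structure Config (P : Fin 7 → ℤ × ℤ) (X : Fin 15 → ℤ × ℤ) (tab : List (ℕ × ℕ))
    (q : ℕ → ℕ → Bool) : Prop where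
  inj : ∀ i j, P i = P j → i = j
  gen : ∀ i j k, i ≠ j → i ≠ k → j ≠ k → zdet (P i) (P j) (P k) ≠ 0
  cw : zdet (P 0) (P 1) (P 2) < 0
  sides : ∀ i, zClosed (P 0) (P 1) (P 2) (P i)
  inner : ∀ i, 2 < i → zOpen (P 0) (P 1) (P 2) (P i)
  testsIn : ∀ m, zClosed (P 0) (P 1) (P 2) (X m)
  cands : ∀ i j k, zdet (P i) (P j) (P k) < 0 →
    (∀ l, zClosed (P i) (P j) (P k) (P l) → l = i ∨ l = j ∨ l = k) →
    ∃ t ∈ tab, t.1 = code i j k ∨ t.1 = code j k i ∨ t.1 = code k i j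
  masks : ∀ t ∈ tab, t.2 < 2 ^ 15
  codes : ∀ t ∈ tab, ∀ t' ∈ tab, t.1 = t'.1 → t = t'
  codesRot : ∀ t ∈ tab, ∀ i j k, t.1 = code i j k →
    (∀ t' ∈ tab, t'.1 = code j k i ∨ t'.1 = code k i j → t' = t) ∧
    ∀ m : Fin 15, (zClosed (P i) (P j) (P k) (X m) → t.2.testBit m = true) ∧
      (t.2.testBit m = true → zOpen (P i) (P j) (P k) (X m))
  run : search tab (leafTest q) (List.range 15) [] 0 = true

/-- The point set of a configuration. -/
def ptSet (P : Fin 7 → ℤ × ℤ) : Finset Pt := Finset.univ.image fun i => emb (P i)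

lemma mem_ptSet (P : Fin 7 → ℤ × ℤ) (x : Pt) : x ∈ ptSet P ↔ ∃ i, emb (P i) = x := by
  simp [ptSet]

/-- The face relation of a triangulation in terms of indices. -/
def idxFace {P : Fin 7 → ℤ × ℤ} (T : Triangulation (ptSet P)) (i j k : Fin 7) : Bool :=
  decide (IsFace T (emb (P i)) (emb (P j)) (emb (P k)))

lemma idxFace_iff {P : Fin 7 → ℤ × ℤ} (T : Triangulation (ptSet P)) (i j k : Fin 7) :
    idxFace T i j k = true ↔ IsFace T (emb (P i)) (emb (P j)) (emb (P k)) := by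
  simp [idxFace]

lemma isFace_rot {S : Finset Pt} (T : Triangulation S) (a b c : Pt) :
    IsFace T a b c → IsFace T b c a := by
  unfold IsFace
  tauto

lemma triPts_rot (a b c : Pt) : triPts (b, c, a) = triPts (a, b, c) := by
  ext x
  simp only [triPts, Set.mem_insert_iff, Set.mem_singleton_iff]
  tauto

lemma triHull_rot (a b c : Pt) : triHull (b, c, a) = triHull (a, b, c) := by
  rw [triHull, triHull, triPts_rot]

/-- From a face up to rotation to an actual face with the same triangle. -/
lemma isFace_exists {S : Finset Pt} (T : Triangulation S) (a b c : Pt) (h : IsFace T a b c) :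
    ∃ t ∈ T.faces, (t = (a, b, c) ∨ t = (b, c, a) ∨ t = (c, a, b)) ∧
      triPts t = triPts (a, b, c) ∧ triHull t = triHull (a, b, c) ∧
      rdet t.1 t.2.1 t.2.2 = rdet a b c := by
  rcases h with h | h | h
  · exact ⟨_, h, Or.inl rfl, rfl, rfl, rfl⟩
  · exact ⟨_, h, Or.inr (Or.inl rfl), triPts_rot a b c, triHull_rot a b c, rdet_rot a b c⟩
  · refine ⟨_, h, Or.inr (Or.inr rfl), ?_, ?_, ?_⟩
    · rw [← triPts_rot c a b]
    · rw [← triHull_rot c a b]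
    · exact (rdet_rot c a b).symm

lemma isFace_cw {S : Finset Pt} (T : Triangulation S) (a b c : Pt) (h : IsFace T a b c) :
    rdet a b c < 0 := by
  obtain ⟨t, ht, -, -, -, h4⟩ := isFace_exists T a b c h
  rw [← h4]
  exact T.cw_face t ht

lemma isFace_disj {S : Finset Pt} (T : Triangulation S) (a b c a' b' c' x : Pt)
    (h : IsFace T a b c) (h' : IsFace T a' b' c') (hx : inOpen a b c x)
    (hx' : inOpen a' b' c' x) :
    (a', b', c') = (a, b, c) ∨ (a', b', c') = (b, c, a) ∨ (a', b', c') = (c, a, b) := by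
  have hi := mem_interior_of_inOpen a b c x (isFace_cw T _ _ _ h) hx
  have hi' := mem_interior_of_inOpen a' b' c' x (isFace_cw T _ _ _ h') hx'
  obtain ⟨t, ht, h1, -, h3, -⟩ := isFace_exists T a b c h
  obtain ⟨t', ht', h1', -, h3', -⟩ := isFace_exists T a' b' c' h'
  have heq : t = t' := by
    by_contra hne
    have hd := T.disj t ht t' ht' hne
    rw [triInt, ← h3] at hi
    rw [triInt, ← h3'] at hi'
    have : x ∈ triInt t ∩ triInt t' := ⟨hi, hi'⟩
    rw [hd] at this
    exact this
  subst heq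
  rcases h1 with rfl | rfl | rfl <;> simp only [Prod.mk.injEq] at h1' ⊢ <;> tauto

section config

variable {P : Fin 7 → ℤ × ℤ} {X : Fin 15 → ℤ × ℤ} {tab : List (ℕ × ℕ)} {q : ℕ → ℕ → Bool}

lemma Config.emb_inj (C : Config P X tab q) : Function.Injective fun i => emb (P i) :=
  fun i j h => C.inj i j (emb_injective h)

lemma Config.card (C : Config P X tab q) : (ptSet P).card = 7 := by
  rw [ptSet, Finset.card_image_of_injective _ C.emb_inj]
  simp

lemma Config.genPos (C : Config P X tab q) : GenPos (ptSet P : Set Pt) := by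
  intro a ha b hb c hc hab hac hbc hcol
  obtain ⟨i, rfl⟩ := (mem_ptSet P a).1 ha
  obtain ⟨j, rfl⟩ := (mem_ptSet P b).1 hb
  obtain ⟨k, rfl⟩ := (mem_ptSet P c).1 hc
  have h := rdet_eq_zero_of_collinear _ _ _ hcol
  rw [rdet_emb] at h
  refine C.gen i j k ?_ ?_ ?_ (by exact_mod_cast h)
  · rintro rfl; exact hab rfl
  · rintro rfl; exact hac rfl
  · rintro rfl; exact hbc rfl

lemma Config.triHull_subset (_C : Config P X tab q) :
    triHull (emb (P 0), emb (P 1), emb (P 2)) ⊆ convexHull ℝ (ptSet P : Set Pt) := by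
  apply convexHull_mono
  intro x hx
  simp only [triPts, Set.mem_insert_iff, Set.mem_singleton_iff] at hx
  apply (mem_ptSet P x).2
  rcases hx with rfl | rfl | rfl
  · exact ⟨0, rfl⟩
  · exact ⟨1, rfl⟩
  · exact ⟨2, rfl⟩

lemma Config.cwR (C : Config P X tab q) : rdet (emb (P 0)) (emb (P 1)) (emb (P 2)) < 0 := by
  rw [rdet_emb]
  exact_mod_cast C.cw

lemma Config.frontier_iff (C : Config P X tab q) (i : Fin 7) :
    emb (P i) ∈ frontier (convexHull ℝ (ptSet P : Set Pt)) ↔ i ≤ 2 := by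
  have hmem : emb (P i) ∈ convexHull ℝ (ptSet P : Set Pt) :=
    subset_convexHull ℝ _ ((mem_ptSet P _).2 ⟨i, rfl⟩)
  constructor
  · intro h
    by_contra hi
    have ho := (inOpen_emb _ _ _ _).2 (C.inner i (not_le.1 hi))
    have := mem_interior_of_inOpen _ _ _ _ C.cwR ho
    exact h.2 (interior_mono C.triHull_subset this)
  · intro hi
    refine ⟨subset_closure hmem, ?_⟩
    have hs : ∀ x ∈ (ptSet P : Set Pt), inClosed (emb (P 0)) (emb (P 1)) (emb (P 2)) x := by
      intro x hx
      obtain ⟨j, rfl⟩ := (mem_ptSet P x).1 hx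
      exact (inClosed_emb _ _ _ _).2 (C.sides j)
    have hi' : i = 0 ∨ i = 1 ∨ i = 2 := by
      clear hmem; revert hi; revert i; decide
    rcases hi' with rfl | rfl | rfl
    · exact not_mem_interior _ _ _ _ _ (fun x hx => (hs x hx).1) (rdet_self_left _ _) C.cwR
    · exact not_mem_interior _ _ _ _ _ (fun x hx => (hs x hx).1) (rdet_self_right _ _) C.cwR
    · refine not_mem_interior _ _ _ _ (emb (P 0)) (fun x hx => (hs x hx).2.1)
        (rdet_self_right _ _) ?_
      rw [rdet_rot]
      exact C.cwR

lemma Config.hullCount_eq (C : Config P X tab q) : hullCount (ptSet P) = 3 := by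
  have : (ptSet P).filter (fun p => p ∈ frontier (convexHull ℝ (ptSet P : Set Pt))) =
      (Finset.univ.filter fun i : Fin 7 => i ≤ 2).image fun i => emb (P i) := by
    ext x
    simp only [Finset.mem_filter, Finset.mem_image, mem_ptSet, Finset.mem_univ, true_and]
    constructor
    · rintro ⟨⟨i, rfl⟩, h⟩
      exact ⟨i, (C.frontier_iff i).1 h, rfl⟩
    · rintro ⟨i, hi, rfl⟩
      exact ⟨⟨i, rfl⟩, (C.frontier_iff i).2 hi⟩
  unfold hullCount
  rw [this, Finset.card_image_of_injective _ C.emb_inj]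
  decide

lemma Config.cand (C : Config P X tab q) (T : Triangulation (ptSet P)) (i j k : Fin 7)
    (h : IsFace T (emb (P i)) (emb (P j)) (emb (P k))) :
    ∃ t ∈ tab, t.1 = code i j k ∨ t.1 = code j k i ∨ t.1 = code k i j := by
  have hcw := isFace_cw T _ _ _ h
  apply C.cands
  · rw [rdet_emb] at hcw
    exact_mod_cast hcw
  · intro l hl
    have hl' := mem_of_inClosed _ _ _ _ hcw ((inClosed_emb _ _ _ _).2 hl)
    obtain ⟨t, ht, -, h2, h3, -⟩ := isFace_exists T _ _ _ h
    have := T.empty_face t ht (emb (P l)) ((mem_ptSet P _).2 ⟨l, rfl⟩) (by rw [h3]; exact hl')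
    rw [h2] at this
    simp only [triPts, Set.mem_insert_iff, Set.mem_singleton_iff] at this
    rcases this with h | h | h
    · exact Or.inl (C.emb_inj h)
    · exact Or.inr (Or.inl (C.emb_inj h))
    · exact Or.inr (Or.inr (C.emb_inj h))

lemma Config.inv (C : Config P X tab q) (T : Triangulation (ptSet P)) :
    q (hist (idxFace T) 2) (hist (idxFace T) 4) = true := by
  let G : ℕ × ℕ → Prop := fun t => t ∈ tab ∧
    ∃ i j k, t.1 = code i j k ∧ IsFace T (emb (P i)) (emb (P j)) (emb (P k))
  have hdis : ∀ t t' b, G t → G t' → t.2.testBit b = true → t'.2.testBit b = true → t = t' := by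
    rintro t t' b ⟨ht, i, j, k, hc, hF⟩ ⟨ht', i', j', k', hc', hF'⟩ hb hb'
    have hb15 : b < 15 := by
      by_contra hcon
      have hlt : t.2 < 2 ^ b :=
        lt_of_lt_of_le (C.masks t ht) (Nat.pow_le_pow_right (by norm_num) (not_lt.1 hcon))
      rw [Nat.testBit_lt_two_pow hlt] at hb
      simp at hb
    have ho := ((C.codesRot t ht i j k hc).2 ⟨b, hb15⟩).2 hb
    have ho' := ((C.codesRot t' ht' i' j' k' hc').2 ⟨b, hb15⟩).2 hb'
    have hd := isFace_disj T _ _ _ _ _ _ _ hF hF' ((inOpen_emb _ _ _ _).2 ho)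
      ((inOpen_emb _ _ _ _).2 ho')
    simp only [Prod.mk.injEq] at hd
    rcases hd with ⟨h1, h2, h3⟩ | ⟨h1, h2, h3⟩ | ⟨h1, h2, h3⟩ <;>
      (replace h1 := C.emb_inj h1; replace h2 := C.emb_inj h2; replace h3 := C.emb_inj h3;
       subst h1 h2 h3)
    · exact C.codes t ht t' ht' (hc.trans hc'.symm)
    · exact ((C.codesRot t ht _ _ _ hc).1 t' ht' (Or.inl hc')).symm
    · exact ((C.codesRot t ht _ _ _ hc).1 t' ht' (Or.inr hc')).symm
  have hcov : ∀ m ∈ List.range 15, ∃ t, G t ∧ t.2.testBit m = true := by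
    intro m hm
    have hm' : m < 15 := List.mem_range.1 hm
    have hx : emb (X ⟨m, hm'⟩) ∈ convexHull ℝ (ptSet P : Set Pt) :=
      C.triHull_subset (mem_of_inClosed _ _ _ _ C.cwR
        ((inClosed_emb _ _ _ _).2 (C.testsIn ⟨m, hm'⟩)))
    rw [← T.cover] at hx
    simp only [Set.mem_iUnion] at hx
    obtain ⟨⟨a, b, c⟩, ht, hx⟩ := hx
    have hv := T.verts_mem _ ht
    obtain ⟨i, rfl⟩ := (mem_ptSet P a).1 (hv (by simp [triPts]))
    obtain ⟨j, rfl⟩ := (mem_ptSet P b).1 (hv (by simp [triPts]))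
    obtain ⟨k, rfl⟩ := (mem_ptSet P c).1 (hv (by simp [triPts]))
    have hF : IsFace T (emb (P i)) (emb (P j)) (emb (P k)) := Or.inl ht
    have hz := (inClosed_emb _ _ _ _).1 (inClosed_of_mem _ _ _ _ (isFace_cw T _ _ _ hF) hx)
    obtain ⟨t, htt, hc⟩ := C.cand T i j k hF
    rcases hc with hc | hc | hc
    · exact ⟨t, ⟨htt, i, j, k, hc, hF⟩, ((C.codesRot t htt _ _ _ hc).2 ⟨m, hm'⟩).1 hz⟩
    · exact ⟨t, ⟨htt, j, k, i, hc, isFace_rot T _ _ _ hF⟩,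
        ((C.codesRot t htt _ _ _ hc).2 ⟨m, hm'⟩).1 ⟨hz.2.1, hz.2.2, hz.1⟩⟩
    · exact ⟨t, ⟨htt, k, i, j, hc, isFace_rot T _ _ _ (isFace_rot T _ _ _ hF)⟩,
        ((C.codesRot t htt _ _ _ hc).2 ⟨m, hm'⟩).1 ⟨hz.2.2, hz.1, hz.2.1⟩⟩
  obtain ⟨ch, hch, hleaf⟩ := search_sound tab (leafTest q) G (fun t h => h.1) hdis
    (List.range 15) [] 0 hcov (by simp) (by simp) (by simp) C.run
  have hface : idxFace T = faceOf ch := by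
    funext i j k
    rw [Bool.eq_iff_iff, idxFace_iff]
    simp only [faceOf, List.any_eq_true, Bool.or_eq_true, beq_iff_eq]
    constructor
    · intro hF
      obtain ⟨t, htt, hc⟩ := C.cand T i j k hF
      refine ⟨t, (hch t).1 ⟨htt, ?_⟩, hc⟩
      rcases hc with hc | hc | hc
      · exact ⟨i, j, k, hc, hF⟩
      · exact ⟨j, k, i, hc, isFace_rot T _ _ _ hF⟩
      · exact ⟨k, i, j, hc, isFace_rot T _ _ _ (isFace_rot T _ _ _ hF)⟩
    · rintro ⟨t, ht, hc⟩
      obtain ⟨-, i', j', k', hc', hF⟩ := (hch t).2 ht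
      have hcode : ∀ a b c a' b' c' : Fin 7, code a b c = code a' b' c' →
          a = a' ∧ b = b' ∧ c = c' := by
        intro a b c a' b' c' h
        simp only [code] at h
        refine ⟨Fin.ext ?_, Fin.ext ?_, Fin.ext ?_⟩ <;> omega
      rcases hc with hc | hc | hc
      · obtain ⟨rfl, rfl, rfl⟩ := hcode _ _ _ _ _ _ (hc'.symm.trans hc)
        exact hF
      · obtain ⟨rfl, rfl, rfl⟩ := hcode _ _ _ _ _ _ (hc'.symm.trans hc)
        exact isFace_rot T _ _ _ (isFace_rot T _ _ _ hF)
      · obtain ⟨rfl, rfl, rfl⟩ := hcode _ _ _ _ _ _ (hc'.symm.trans hc)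
        exact isFace_rot T _ _ _ hF
  rw [hface]
  exact hleaf

end config

lemma compatible_hist {P P' : Fin 7 → ℤ × ℤ} (hP : Function.Injective fun i => emb (P i))
    (T : Triangulation (ptSet P)) (T' : Triangulation (ptSet P'))
    (h : Compatible T T') (d : ℕ) : hist (idxFace T) d = hist (idxFace T') d := by
  obtain ⟨f, hbij, hf⟩ := h
  have hmem : ∀ i, emb (P i) ∈ ptSet P := fun i => (mem_ptSet P _).2 ⟨i, rfl⟩
  have hex : ∀ i, ∃ j, emb (P' j) = f (emb (P i)) := by
    intro i
    exact (mem_ptSet P' _).1 (hbij.mapsTo (hmem i))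
  choose σ hσ using hex
  have hinj : Function.Injective σ := by
    intro i j hij
    have : f (emb (P i)) = f (emb (P j)) := by rw [← hσ i, ← hσ j, hij]
    exact hP (hbij.injOn (hmem i) (hmem j) this)
  refine hist_perm _ _ (Equiv.ofBijective σ (Finite.injective_iff_bijective.1 hinj)) ?_ d
  intro i j k
  rw [Bool.eq_iff_iff, idxFace_iff, idxFace_iff, hf _ (hmem i) _ (hmem j) _ (hmem k)]
  simp [hσ]

/-! ### The three configurations -/

def ptsA (i : Fin 7) : ℤ × ℤ :=
  [(40, 640), (640, 320), (120, 160), (160, 520), (520, 360), (360, 360), (320, 320)].getD i.val (0, 0)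

def testsA (i : Fin 15) : ℤ × ℤ :=
  [(417, 286), (214, 220), (203, 552), (189, 492), (374, 385), (94, 319), (514, 369), (492, 356), (390, 350), (173, 514), (106, 572), (321, 327), (188, 479), (480, 350), (167, 517)].getD i.val (0, 0)

def tabA : List (ℕ × ℕ) :=
  [(10, 4), (11, 68), (23, 1056), (27, 5120), (31, 16384), (33, 16), (38, 16896), (44, 32), (67, 1), (69, 3), (80, 16448), (88, 8320), (95, 8192), (96, 256), (124, 4104), (125, 4096), (139, 2048), (144, 8194), (180, 528), (188, 2056), (243, 384)]

def condA (a b : ℕ) : Bool := !(a == 0) || !(b == 1 || b == 2)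

set_option maxRecDepth 100000 in
lemma configA : Config ptsA testsA tabA condA where
  inj := by decide +kernel
  gen := by decide +kernel
  cw := by decide +kernel
  sides := by decide +kernel
  inner := by decide +kernel
  testsIn := by decide +kernel
  cands := by decide +kernel
  masks := by decide +kernel
  codes := by decide +kernel
  codesRot := by decide +kernel
  run := by decide +kernel

def ptsB (i : Fin 7) : ℤ × ℤ :=
  [(0, 0), (0, 640), (640, 520), (320, 360), (240, 360), (480, 400), (80, 480)].getD i.val (0, 0)

def testsB (i : Fin 15) : ℤ × ℤ :=
  [(7, 287), (216, 176), (278, 242), (95, 211), (180, 219), (427, 523), (371, 380), (66, 534), (486, 420), (138, 441), (304, 361), (274, 373), (305, 370), (117, 473), (329, 374)].getD i.val (0, 0)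

def tabB : List (ℕ × ℕ) :=
  [(13, 1), (26, 4), (31, 16), (37, 2), (46, 8), (66, 16416), (67, 32), (68, 288), (69, 160), (74, 7168), (76, 12416), (83, 8832), (87, 16448), (88, 2048), (90, 8320), (123, 23552), (125, 28672), (132, 8704), (136, 320), (137, 2304), (139, 8448), (180, 21568), (181, 3584), (194, 20544), (243, 2560)]

def condB (a b : ℕ) : Bool := !(a == 0) || (b == 1 || b == 2)

set_option maxRecDepth 100000 in
lemma configB : Config ptsB testsB tabB condB where
  inj := by decide +kernel
  gen := by decide +kernel
  cw := by decide +kernel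
  sides := by decide +kernel
  inner := by decide +kernel
  testsIn := by decide +kernel
  cands := by decide +kernel
  masks := by decide +kernel
  codes := by decide +kernel
  codesRot := by decide +kernel
  run := by decide +kernel

def ptsC (i : Fin 7) : ℤ × ℤ :=
  [(0, 0), (200, 640), (640, 80), (80, 40), (80, 240), (240, 200), (40, 80)].getD i.val (0, 0)

def testsC (i : Fin 15) : ℤ × ℤ :=
  [(459, 286), (50, 126), (126, 34), (136, 429), (26, 23), (59, 42), (465, 73), (170, 444), (538, 110), (108, 322), (366, 95), (169, 502), (77, 214), (79, 60), (225, 200)].getD i.val (0, 0)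

def tabC : List (ℕ × ℕ) :=
  [(11, 8), (23, 4), (34, 2), (38, 8224), (45, 48), (47, 16), (68, 1), (74, 2560), (76, 10240), (87, 16512), (88, 2688), (90, 18560), (95, 4608), (123, 1088), (124, 1344), (125, 8256), (131, 16640), (144, 5120), (145, 1280), (180, 16384), (193, 12288), (194, 8192), (237, 20480)]

def condC (a _b : ℕ) : Bool := a == 0

set_option maxRecDepth 100000 in
lemma configC : Config ptsC testsC tabC condC where
  inj := by decide +kernel
  gen := by decide +kernel
  cw := by decide +kernel
  sides := by decide +kernel
  inner := by decide +kernel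
  testsIn := by decide +kernel
  cands := by decide +kernel
  masks := by decide +kernel
  codes := by decide +kernel
  codesRot := by decide +kernel
  run := by decide +kernel

/-- There exist three planar point sets, each with 7 points and convex hulls of
equal size, admitting no 3-way compatible triangulation (without Steiner points). -/
theorem exists_three_sets_no_threeway_compatible :
    ∃ S₁ S₂ S₃ : Finset Pt,
      S₁.card = 7 ∧ S₂.card = 7 ∧ S₃.card = 7 ∧
      GenPos (S₁ : Set Pt) ∧ GenPos (S₂ : Set Pt) ∧ GenPos (S₃ : Set Pt) ∧
      hullCount S₁ = hullCount S₂ ∧ hullCount S₂ = hullCount S₃ ∧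
      ¬ ∃ (T₁ : Triangulation S₁) (T₂ : Triangulation S₂) (T₃ : Triangulation S₃),
          Compatible T₁ T₂ ∧ Compatible T₂ T₃ ∧ Compatible T₁ T₃ := by
  refine ⟨ptSet ptsA, ptSet ptsB, ptSet ptsC, configA.card, configB.card, configC.card,
    configA.genPos, configB.genPos, configC.genPos, ?_, ?_, ?_⟩
  · rw [configA.hullCount_eq, configB.hullCount_eq]
  · rw [configB.hullCount_eq, configC.hullCount_eq]
  · rintro ⟨T₁, T₂, T₃, h12, h23, -⟩
    have e12 := compatible_hist configA.emb_inj T₁ T₂ h12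
    have e23 := compatible_hist configB.emb_inj T₂ T₃ h23
    have hA := configA.inv T₁
    have hB := configB.inv T₂
    have hC := configC.inv T₃
    rw [e12, e12] at hA
    rw [← e23, ← e23] at hC
    simp only [condA, condB, condC] at hA hB hC
    have h0 : hist (idxFace T₂) 2 = 0 := by simpa using hC
    rw [h0] at hA hB
    simp at hA hB
    omega
end
end
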